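/- Fix an integer d ≥ 2 and δ ∈ (0,1). Let a^{jk} : ℝ² → ℝ (1 ≤ j,k ≤ d) be smooth functions of (t,x¹) only, with a^{jk} = a^{kj} and δ|θ|² ≤ Σ_{j,k=1}^d a^{jk}(t,x¹) θ^j θ^k ≤ δ⁻¹|θ|² for all (t,x¹) and θ ∈ ℝ^d. Let u : ℝ^{d+1} → ℝ be smooth with compact support, let λ ≥ 0, and set f = u_t + Σ_{j,k=1}^d a^{jk} u_{x^j x^k} − λu. Then there is a constant N = N(δ) such that for every ξ ∈ ℝ^{d-1}: ∫_{ℝ²} |ũ_t(t,x¹,ξ)|² dx¹dt + ∫_{ℝ²} |ũ_{x¹x¹}(t,x¹,ξ)|² dx¹dt + (|ξ|⁴ + λ²) ∫_{ℝ²} |ũ(t,x¹,ξ)|² dx¹dt + (|ξ|² + λ) ∫_{ℝ²} |ũ_{x¹}(t,x¹,ξ)|² dx¹dt ≤ N ∫_{ℝ²} |f̃(t,x¹,ξ)|² dx¹dt. -/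

import Mathlib

open MeasureTheory

/-- Partial derivative in `t` of a function on `ℝ^{d+1} = ℝ × (Fin d → ℝ)`. -/
noncomputable def pdt {d : ℕ} (u : ℝ × (Fin d → ℝ) → ℝ) : ℝ × (Fin d → ℝ) → ℝ :=
  fun p => fderiv ℝ u p (1, 0)

/-- Partial derivative in `x^j`. -/
noncomputable def pdx {d : ℕ} (j : Fin d) (u : ℝ × (Fin d → ℝ) → ℝ) :
    ℝ × (Fin d → ℝ) → ℝ :=
  fun p => fderiv ℝ u p (0, Pi.single j 1)

/-- Second partial derivative in `x^j, x^k`. -/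
noncomputable def pdxx {d : ℕ} (j k : Fin d) (u : ℝ × (Fin d → ℝ) → ℝ) :
    ℝ × (Fin d → ℝ) → ℝ :=
  pdx j (pdx k u)

/-- Partial Fourier transform in the variables `x' ∈ ℝ^{d-1}` (spatial dimension
`d = n+1`): `ṽ(t,x¹,ξ) = ∫_{ℝ^n} v(t,x¹,x') e^{−i ξ·x'} dx'`. -/
noncomputable def pFourier {n : ℕ} (v : ℝ × (Fin (n + 1) → ℝ) → ℝ)
    (t y : ℝ) (ξ : Fin n → ℝ) : ℂ :=
  ∫ x' : Fin n → ℝ,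
    (v (t, Fin.cons y x') : ℂ) * Complex.exp (-Complex.I * ((∑ j, ξ j * x' j : ℝ) : ℂ))

/-- `∂ũ/∂t`. -/
noncomputable def pFourierT {n : ℕ} (v : ℝ × (Fin (n + 1) → ℝ) → ℝ)
    (t y : ℝ) (ξ : Fin n → ℝ) : ℂ :=
  deriv (fun s => pFourier v s y ξ) t

/-- `∂ũ/∂x¹`. -/
noncomputable def pFourierX {n : ℕ} (v : ℝ × (Fin (n + 1) → ℝ) → ℝ)
    (t y : ℝ) (ξ : Fin n → ℝ) : ℂ :=
  deriv (fun z => pFourier v t z ξ) y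

/-- `∂²ũ/(∂x¹)²`. -/
noncomputable def pFourierXX {n : ℕ} (v : ℝ × (Fin (n + 1) → ℝ) → ℝ)
    (t y : ℝ) (ξ : Fin n → ℝ) : ℂ :=
  deriv (fun z => pFourierX v t z ξ) y


theorem MeasureTheory.Integrable.fadd {f g : ℝ → ℝ} (hf : Integrable f) (hg : Integrable g) :
    Integrable (fun x => f x + g x) := hf.add hg
theorem MeasureTheory.Integrable.fsub {f g : ℝ → ℝ} (hf : Integrable f) (hg : Integrable g) :
    Integrable (fun x => f x - g x) := hf.sub hg

def CC (f : ℝ → ℝ) : Prop := Continuous f ∧ HasCompactSupport f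

lemma CC.int {f : ℝ → ℝ} (hf : CC f) : Integrable f := hf.1.integrable_of_hasCompactSupport hf.2
lemma CC.mul {f g : ℝ → ℝ} (hf : CC f) (hg : CC g) : CC (fun y => f y * g y) :=
  ⟨hf.1.mul hg.1, hf.2.mul_right⟩
lemma CC.add {f g : ℝ → ℝ} (hf : CC f) (hg : CC g) : CC (fun y => f y + g y) :=
  ⟨hf.1.add hg.1, hf.2.add hg.2⟩
lemma CC.smul {f : ℝ → ℝ} (c : ℝ) (hf : CC f) : CC (fun y => c * f y) :=
  ⟨continuous_const.mul hf.1, hf.2.mul_left⟩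
lemma CC.cmul {f a : ℝ → ℝ} (ha : Continuous a) (hf : CC f) : CC (fun y => a y * f y) :=
  ⟨ha.mul hf.1, hf.2.mul_left⟩
lemma CC.shift {f : ℝ → ℝ} (c : ℝ) (hf : CC f) : CC (fun y => f (y + c)) :=
  ⟨hf.1.comp (continuous_id.add continuous_const), hf.2.comp_homeomorph (Homeomorph.addRight c)⟩
lemma CC.sq {f : ℝ → ℝ} (hf : CC f) : CC (fun y => f y ^ 2) := by
  have := hf.mul hf
  simpa only [pow_two] using this

noncomputable def Lap (h : ℝ) (f : ℝ → ℝ) (y : ℝ) : ℝ := (f (y + h) + f (y - h) - 2 * f y) / h ^ 2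

lemma CC.lap {f : ℝ → ℝ} (h : ℝ) (hf : CC f) : CC (Lap h f) := by
  have := (((hf.shift h).add (hf.shift (-h))).add (hf.smul (-2))).smul (1 / h ^ 2)
  convert this using 2 with y
  unfold Lap
  rw [sub_eq_add_neg y h]; ring

/-- symmetric bilinear expression for the discrete Laplacian -/
lemma lap_form {f g : ℝ → ℝ} (h : ℝ) (hf : CC f) (hg : CC g) :
    ∫ y, f y * Lap h g y = - ((∫ y, (f (y + h) - f y) * (g (y + h) - g y)) / h ^ 2) := by
  have e1 : ∫ y, f (y + h) * g y = ∫ y, f y * g (y - h) := by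
    rw [← integral_sub_right_eq_self (fun y => f (y + h) * g y) h]; simp
  have e2 : ∫ y, f (y + h) * g (y + h) = ∫ y, f y * g y :=
    integral_add_right_eq_self (fun y => f y * g y) h
  have i1 := ((hf.shift h).mul hg).int
  have i2 := ((hf.shift h).mul (hg.shift h)).int
  have i3 := (hf.mul hg).int
  have i4 := (hf.mul (hg.shift h)).int
  have i5 : Integrable fun y => f y * g (y - h) := (hf.mul (hg.shift (-h))).int
  have l : ∫ y, f y * Lap h g y =
      ((∫ y, f y * g (y + h)) + (∫ y, f y * g (y - h)) - 2 * ∫ y, f y * g y) / h ^ 2 := by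
    rw [← integral_const_mul, ← integral_add i4 i5, ← integral_sub (i4.fadd i5) (i3.const_mul 2),
      ← integral_div]
    congr 1; ext y; unfold Lap; ring
  have r : ∫ y, (f (y + h) - f y) * (g (y + h) - g y) =
      (∫ y, f (y + h) * g (y + h)) - (∫ y, f (y + h) * g y) - (∫ y, f y * g (y + h))
        + ∫ y, f y * g y := by
    rw [← integral_sub i2 i1, ← integral_sub (i2.fsub i1) i4, ← integral_add ((i2.fsub i1).fsub i4) i3]
    congr 1; ext y; ring
  rw [l, r, e1, e2]; ring

lemma lap_symm {f g : ℝ → ℝ} (h : ℝ) (hf : CC f) (hg : CC g) :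
    ∫ y, f y * Lap h g y = ∫ y, g y * Lap h f y := by
  rw [lap_form h hf hg, lap_form h hg hf]; simp only [mul_comm]

lemma lap_neg {f : ℝ → ℝ} (h : ℝ) (hf : CC f) : ∫ y, f y * Lap h f y ≤ 0 := by
  rw [lap_form h hf hf, neg_nonpos]
  apply div_nonneg _ (sq_nonneg _)
  exact integral_nonneg fun y => mul_self_nonneg _

lemma lap_lower {f : ℝ → ℝ} (h : ℝ) (hf : CC f) :
    - (∫ y, f y * Lap h f y) ≤ 4 / h ^ 2 * ∫ y, f y ^ 2 := by
  rw [lap_form h hf hf, neg_neg, div_mul_eq_mul_div]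
  apply div_le_div_of_nonneg_right _ (sq_nonneg _)
  have e2 : ∫ y, f (y + h) ^ 2 = ∫ y, f y ^ 2 := integral_add_right_eq_self (fun y => f y ^ 2) h
  have i1 := (hf.shift h).sq.int
  have i2 := hf.sq.int
  calc ∫ y, (f (y + h) - f y) * (f (y + h) - f y)
      ≤ ∫ y, (2 * f (y + h) ^ 2 + 2 * f y ^ 2) := by
        apply integral_mono
        · have := ((hf.shift h).add (hf.smul (-1)))
          convert (this.mul this).int using 2; ring
        · exact (i1.const_mul 2).add (i2.const_mul 2)
        · intro y; simp only; nlinarith [sq_nonneg (f (y + h) + f y)]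
    _ = 4 * ∫ y, f y ^ 2 := by
        rw [integral_add (i1.const_mul 2) (i2.const_mul 2), integral_const_mul, integral_const_mul, e2]
        ring

/-- one step of the energy estimate. -/
lemma energy_step {δ h τ μ : ℝ} (hδ : 0 < δ) (hτ : 0 < τ) (hμ : 0 ≤ μ)
    {v v' g a : ℝ → ℝ} (hv : CC v) (hv' : CC v') (hg : CC g)
    (ha : ∀ y, δ ≤ a y ∧ a y ≤ δ⁻¹)
    (hrec : ∀ y, v' y = v y + τ * (a y * Lap h v y - μ * v y + g y)) :
    ∃ ST SY : ℝ, 0 ≤ ST ∧ 0 ≤ SY ∧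
      δ * SY ≤ ((∫ y, v' y * Lap h v' y) - (∫ y, v y * Lap h v y)) / τ + 4 * τ / h ^ 2 * ST
        + δ⁻¹ * ∫ y, g y ^ 2 ∧
      μ ^ 2 * (∫ y, v y ^ 2) ≤ μ * (((∫ y, v y ^ 2) - ∫ y, v' y ^ 2) / τ) + μ * τ * ST
        + 2 * δ⁻¹ ^ 2 * SY + 2 * ∫ y, g y ^ 2 ∧
      ST ≤ 3 * δ⁻¹ ^ 2 * SY + 3 * (μ ^ 2 * ∫ y, v y ^ 2) + 3 * ∫ y, g y ^ 2 := by
  set T : ℝ → ℝ := fun y => a y * Lap h v y - μ * v y + g y with hT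
  have hTe : ∀ y, T y = (1 / τ) * (v' y + (-1) * v y) := by
    intro y; rw [hrec y]; field_simp; simp only [hT]; ring
  have cT : CC T := by
    rw [funext hTe]; exact (hv'.add (hv.smul (-1))).smul _
  have cY := hv.lap h
  have cTY := cT.mul cY
  have cWY := hv.mul cY
  have cTW := cT.mul hv
  have hv'e : v' = fun y => v y + τ * T y := by ext y; rw [hrec y]
  have E1 : (∫ y, v' y * Lap h v' y) - (∫ y, v y * Lap h v y)
      = 2 * τ * (∫ y, T y * Lap h v y) + τ ^ 2 * ∫ y, T y * Lap h T y := by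
    have s := lap_symm h hv cT
    have : ∫ y, v' y * Lap h v' y = (∫ y, v y * Lap h v y) + τ * (∫ y, T y * Lap h v y)
        + τ * (∫ y, v y * Lap h T y) + τ ^ 2 * ∫ y, T y * Lap h T y := by
      rw [← integral_const_mul, ← integral_const_mul, ← integral_const_mul,
        ← integral_add cWY.int (cTY.int.const_mul τ),
        ← integral_add (cWY.int.fadd (cTY.int.const_mul τ)) ((hv.mul (cT.lap h)).int.const_mul τ),
        ← integral_add ((cWY.int.fadd (cTY.int.const_mul τ)).fadd ((hv.mul (cT.lap h)).int.const_mul τ))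
          ((cT.mul (cT.lap h)).int.const_mul (τ ^ 2))]
      congr 1; ext y; rw [hv'e]; unfold Lap; ring
    rw [this, s]; ring
  have E2 : (∫ y, v' y ^ 2) = (∫ y, v y ^ 2) + 2 * τ * (∫ y, T y * v y) + τ ^ 2 * ∫ y, T y ^ 2 := by
    rw [← integral_const_mul, ← integral_const_mul, ← integral_add hv.sq.int (cTW.int.const_mul _),
      ← integral_add (hv.sq.int.fadd (cTW.int.const_mul _)) (cT.sq.int.const_mul _)]
    congr 1; ext y; rw [hv'e]; ring
  have N1 := lap_neg h hv
  have N2 := lap_lower h cT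
  have δi : 0 < δ⁻¹ := inv_pos.mpr hδ
  have P1 : δ * (∫ y, Lap h v y ^ 2) ≤ 2 * (∫ y, T y * Lap h v y) + 2 * μ * (∫ y, v y * Lap h v y)
      + δ⁻¹ * ∫ y, g y ^ 2 := by
    rw [← integral_const_mul, ← integral_const_mul, ← integral_const_mul, ← integral_const_mul,
      ← integral_add (cTY.int.const_mul _) (cWY.int.const_mul _),
      ← integral_add ((cTY.int.const_mul _).fadd (cWY.int.const_mul _)) (hg.sq.int.const_mul _)]
    apply integral_mono (cY.sq.int.const_mul _)
      (((cTY.int.const_mul _).fadd (cWY.int.const_mul _)).fadd (hg.sq.int.const_mul _))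
    intro y
    simp only [hT]
    have h1 := mul_nonneg (sub_nonneg.mpr (ha y).1) (sq_nonneg (Lap h v y))
    have h2 : 0 ≤ δ * (Lap h v y + δ⁻¹ * g y) ^ 2 := by positivity
    have h3 : δ * (Lap h v y + δ⁻¹ * g y) ^ 2
      = δ * Lap h v y ^ 2 + 2 * Lap h v y * g y + δ⁻¹ * g y ^ 2 := by field_simp; ring
    rw [h3] at h2
    nlinarith
  have P2 : μ ^ 2 * (∫ y, v y ^ 2) ≤ (-2 * μ) * (∫ y, T y * v y) + (2 * δ⁻¹ ^ 2) * (∫ y, Lap h v y ^ 2)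
      + 2 * ∫ y, g y ^ 2 := by
    rw [← integral_const_mul, ← integral_const_mul, ← integral_const_mul, ← integral_const_mul,
      ← integral_add (cTW.int.const_mul _) (cY.sq.int.const_mul _),
      ← integral_add ((cTW.int.const_mul _).fadd (cY.sq.int.const_mul _)) (hg.sq.int.const_mul _)]
    apply integral_mono (hv.sq.int.const_mul _)
      (((cTW.int.const_mul _).fadd (cY.sq.int.const_mul _)).fadd (hg.sq.int.const_mul _))
    intro y
    simp only [hT]
    have h1 : (a y * Lap h v y) ^ 2 ≤ δ⁻¹ ^ 2 * Lap h v y ^ 2 := by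
      rw [mul_pow]
      apply mul_le_mul_of_nonneg_right _ (sq_nonneg _)
      exact pow_le_pow_left₀ (hδ.le.trans (ha y).1) (ha y).2 2
    nlinarith [sq_nonneg (μ * v y - 2 * (a y * Lap h v y)), sq_nonneg (μ * v y - 2 * g y)]
  have P3 : (∫ y, T y ^ 2) ≤ (3 * δ⁻¹ ^ 2) * (∫ y, Lap h v y ^ 2) + (3 * μ ^ 2) * (∫ y, v y ^ 2)
      + 3 * ∫ y, g y ^ 2 := by
    rw [← integral_const_mul, ← integral_const_mul, ← integral_const_mul,
      ← integral_add (cY.sq.int.const_mul _) (hv.sq.int.const_mul _),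
      ← integral_add ((cY.sq.int.const_mul _).fadd (hv.sq.int.const_mul _)) (hg.sq.int.const_mul _)]
    apply integral_mono cT.sq.int
      (((cY.sq.int.const_mul _).fadd (hv.sq.int.const_mul _)).fadd (hg.sq.int.const_mul _))
    intro y
    simp only [hT]
    have h1 : (a y * Lap h v y) ^ 2 ≤ δ⁻¹ ^ 2 * Lap h v y ^ 2 := by
      rw [mul_pow]
      apply mul_le_mul_of_nonneg_right _ (sq_nonneg _)
      exact pow_le_pow_left₀ (hδ.le.trans (ha y).1) (ha y).2 2
    nlinarith [sq_nonneg (a y * Lap h v y + μ * v y), sq_nonneg (a y * Lap h v y - g y), sq_nonneg (μ * v y + g y)]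
  refine ⟨∫ y, T y ^ 2, ∫ y, Lap h v y ^ 2, integral_nonneg fun y => sq_nonneg _,
    integral_nonneg fun y => sq_nonneg _, ?_, ?_, ?_⟩
  · rw [E1]
    have : (2 * τ * (∫ y, T y * Lap h v y) + τ ^ 2 * ∫ y, T y * Lap h T y) / τ
      = 2 * (∫ y, T y * Lap h v y) + τ * ∫ y, T y * Lap h T y := by field_simp
    rw [this]
    have h2 := mul_le_mul_of_nonneg_left N2 hτ.le
    have h3 : 4 * τ / h ^ 2 * (∫ y, T y ^ 2) = τ * (4 / h ^ 2 * ∫ y, T y ^ 2) := by ring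
    rw [h3]
    nlinarith
  · rw [E2]
    have : ((∫ y, v y ^ 2) - ((∫ y, v y ^ 2) + 2 * τ * (∫ y, T y * v y) + τ ^ 2 * ∫ y, T y ^ 2)) / τ
      = - 2 * (∫ y, T y * v y) - τ * ∫ y, T y ^ 2 := by field_simp; ring
    rw [this]
    linarith
  · linarith

lemma energy {δ h τ μ : ℝ} (hδ : 0 < δ) (hδ1 : δ < 1) (hh : 0 < h) (hτ : τ = δ ^ 3 / 144 * h ^ 2)
    (hμ : 0 ≤ μ) (hμτ : μ * τ ≤ 1 / 6)
    {v g a : ℕ → ℝ → ℝ} (hv0 : ∀ y, v 0 y = 0) (hv : ∀ k, CC (v k)) (hg : ∀ k, CC (g k))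
    (ha : ∀ k y, δ ≤ a k y ∧ a k y ≤ δ⁻¹)
    (hrec : ∀ k y, v (k + 1) y = v k y + τ * (a k y * Lap h (v k) y - μ * v k y + g k y)) (K : ℕ) :
    μ ^ 2 * ∑ k ∈ Finset.range K, (∫ y, v k y ^ 2) ≤
      35 * δ⁻¹ ^ 4 * ∑ k ∈ Finset.range K, (∫ y, g k y ^ 2) := by
  have hτ0 : 0 < τ := by rw [hτ]; positivity
  choose ST SY hST hSY h1 h2 h3 using fun k =>
    energy_step (h := h) hδ hτ0 hμ (hv k) (hv (k + 1)) (hg k) (ha k) (hrec k)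
  have A1 := Finset.sum_le_sum fun k (_ : k ∈ Finset.range K) => h1 k
  have A2 := Finset.sum_le_sum fun k (_ : k ∈ Finset.range K) => h2 k
  have A3 := Finset.sum_le_sum fun k (_ : k ∈ Finset.range K) => h3 k
  simp only [Finset.sum_add_distrib, ← Finset.mul_sum, ← Finset.sum_div] at A1 A2 A3
  rw [Finset.sum_range_sub (fun k => ∫ y, v k y * Lap h (v k) y)] at A1
  rw [Finset.sum_range_sub' (fun k => ∫ y, v k y ^ 2)] at A2
  have B1 : ((∫ y, v K y * Lap h (v K) y) - (∫ y, v 0 y * Lap h (v 0) y)) / τ ≤ 0 := by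
    apply div_nonpos_of_nonpos_of_nonneg _ hτ0.le
    simp only [hv0, zero_mul, integral_zero, sub_zero]
    exact lap_neg h (hv K)
  have B2 : ((∫ y, v 0 y ^ 2) - (∫ y, v K y ^ 2)) / τ ≤ 0 := by
    apply div_nonpos_of_nonpos_of_nonneg _ hτ0.le
    have : 0 ≤ ∫ y, v K y ^ 2 := integral_nonneg fun y => sq_nonneg _
    simp only [hv0]; simpa using this
  have B2' := mul_nonpos_of_nonneg_of_nonpos hμ B2
  have S1 : 0 ≤ ∑ k ∈ Finset.range K, ST k := Finset.sum_nonneg fun k _ => hST k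
  have S2 : 0 ≤ ∑ k ∈ Finset.range K, SY k := Finset.sum_nonneg fun k _ => hSY k
  have S3 : 0 ≤ ∑ k ∈ Finset.range K, (∫ y, g k y ^ 2) :=
    Finset.sum_nonneg fun k _ => integral_nonneg fun y => sq_nonneg _
  have S4 : 0 ≤ μ ^ 2 * ∑ k ∈ Finset.range K, (∫ y, v k y ^ 2) :=
    mul_nonneg (sq_nonneg _) (Finset.sum_nonneg fun k _ => integral_nonneg fun y => sq_nonneg _)
  have e : 4 * τ / h ^ 2 = δ ^ 3 / 36 := by rw [hτ]; field_simp; norm_num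
  rw [e] at A1
  generalize (∑ k ∈ Finset.range K, ST k) = T at *
  generalize (∑ k ∈ Finset.range K, SY k) = Y at *
  generalize (∑ k ∈ Finset.range K, (∫ y, g k y ^ 2)) = G at *
  generalize (μ ^ 2 * ∑ k ∈ Finset.range K, (∫ y, v k y ^ 2)) = W at *
  have C0 := mul_le_mul_of_nonneg_right hμτ S1
  set D := δ⁻¹ with hD
  have hD1 : 1 ≤ D := (one_le_inv₀ hδ).mpr hδ1.le
  have hDδ : δ * D = 1 := mul_inv_cancel₀ hδ.ne'
  have C2 : W ≤ 5 * (D ^ 2 * Y) + 5 * G := by linarith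
  have C3 : T ≤ 18 * (D ^ 2 * Y) + 18 * G := by linarith
  have C1 : δ * Y ≤ δ ^ 3 / 36 * (18 * (D ^ 2 * Y) + 18 * G) + D * G := by
    have := mul_le_mul_of_nonneg_left C3 (by positivity : 0 ≤ δ ^ 3 / 36)
    linarith
  have C1' : δ * Y ≤ δ ^ 3 * G + 2 * D * G := by
    have : δ ^ 3 / 36 * (18 * (D ^ 2 * Y) + 18 * G) = (δ * D) ^ 2 * δ * Y / 2 + δ ^ 3 * G / 2 := by ring
    rw [this, hDδ] at C1
    linarith
  have C4 : D ^ 2 * Y ≤ 3 * D ^ 4 * G := by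
    have := mul_le_mul_of_nonneg_left C1' (by positivity : 0 ≤ D ^ 3)
    have e1 : D ^ 3 * (δ * Y) = (δ * D) * D ^ 2 * Y := by ring
    have e2 : D ^ 3 * (δ ^ 3 * G + 2 * D * G) = (δ * D) ^ 3 * G + 2 * D ^ 4 * G := by ring
    rw [e1, e2, hDδ] at this
    have : G ≤ D ^ 4 * G := le_mul_of_one_le_left S3 (one_le_pow₀ hD1)
    linarith
  have : G ≤ D ^ 4 * G := le_mul_of_one_le_left S3 (one_le_pow₀ hD1)
  have h0 : 0 ≤ D ^ 4 * G := by positivity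
  nlinarith


lemma compare {h τ μ : ℝ} (hh : 0 < h) (hτ : 0 ≤ τ)
    {v r g a : ℕ → ℝ → ℝ} (hv0 : ∀ y, v 0 y = 0) (hr0 : ∀ y, r 0 y ≤ 0)
    (ha : ∀ k y, 0 ≤ a k y) (hc : ∀ k y, 0 ≤ 1 - 2 * a k y * (τ / h ^ 2) - μ * τ)
    (hg : ∀ k y, 0 ≤ g k y)
    (hrec : ∀ k y, v (k + 1) y = v k y + τ * (a k y * Lap h (v k) y - μ * v k y + g k y))
    (hr : ∀ k y, r (k + 1) y = 0 ∨
      r (k + 1) y ≤ r k y + τ * (a k y * Lap h (r k) y - μ * r k y + g k y)) (k : ℕ) :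
    ∀ y, r k y ≤ v k y ∧ 0 ≤ v k y := by
  have form : ∀ (f : ℝ → ℝ) (k : ℕ) (y : ℝ), f y + τ * (a k y * Lap h f y - μ * f y + g k y) =
      (1 - 2 * a k y * (τ / h ^ 2) - μ * τ) * f y + a k y * (τ / h ^ 2) * (f (y + h) + f (y - h))
        + τ * g k y := by
    intro f k y; unfold Lap; field_simp; ring
  induction k with
  | zero => intro y; rw [hv0]; exact ⟨hr0 y, le_rfl⟩
  | succ k ih =>
    intro y
    have hp : 0 ≤ a k y * (τ / h ^ 2) := mul_nonneg (ha k y) (by positivity)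
    have hn : 0 ≤ v (k + 1) y := by
      rw [hrec, form]
      have := (ih y).2; have := (ih (y + h)).2; have := (ih (y - h)).2
      have := hc k y; have := mul_nonneg hτ (hg k y)
      positivity
    refine ⟨?_, hn⟩
    rcases hr k y with h0 | h1
    · rw [h0]; exact hn
    · refine h1.trans ?_
      rw [hrec, form, form]
      have i1 := mul_le_mul_of_nonneg_left (ih y).1 (hc k y)
      have i2 := mul_le_mul_of_nonneg_left (add_le_add (ih (y + h)).1 (ih (y - h)).1) hp
      linarith

noncomputable def vseq (h τ μ : ℝ) (g a : ℕ → ℝ → ℝ) : ℕ → ℝ → ℝ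
  | 0 => fun _ => 0
  | k + 1 => fun y => vseq h τ μ g a k y +
      τ * (a k y * Lap h (vseq h τ μ g a k) y - μ * vseq h τ μ g a k y + g k y)

lemma vseq_CC {h τ μ : ℝ} {g a : ℕ → ℝ → ℝ} (ha : ∀ k, Continuous (a k)) (hg : ∀ k, CC (g k)) (k : ℕ) :
    CC (vseq h τ μ g a k) := by
  induction k with
  | zero => exact ⟨continuous_const, HasCompactSupport.zero⟩
  | succ k ih =>
    have := ih.add ((((CC.cmul (ha k) (ih.lap h)).add (ih.smul (-μ))).add (hg k)).smul τ)
    convert this using 2 with y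
    simp only [vseq]; ring

lemma scheme {δ h τ μ : ℝ} (hδ : 0 < δ) (hδ1 : δ < 1) (hh : 0 < h) (hτ : τ = δ ^ 3 / 144 * h ^ 2)
    (hμ : 0 ≤ μ) (hμτ : μ * τ ≤ 1 / 6)
    {r g a : ℕ → ℝ → ℝ} (hr0 : ∀ y, r 0 y = 0) (hrn : ∀ k y, 0 ≤ r k y)
    (hrc : ∀ k, CC (r k)) (hg : ∀ k, CC (g k)) (hgn : ∀ k y, 0 ≤ g k y)
    (hac : ∀ k, Continuous (a k)) (ha : ∀ k y, δ ≤ a k y ∧ a k y ≤ δ⁻¹)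
    (hr : ∀ k y, r (k + 1) y = 0 ∨
      r (k + 1) y ≤ r k y + τ * (a k y * Lap h (r k) y - μ * r k y + g k y)) (K : ℕ) :
    μ ^ 2 * ∑ k ∈ Finset.range K, (∫ y, r k y ^ 2) ≤
      35 * δ⁻¹ ^ 4 * ∑ k ∈ Finset.range K, (∫ y, g k y ^ 2) := by
  have hτ0 : 0 < τ := by rw [hτ]; positivity
  have cc := vseq_CC (h := h) (τ := τ) (μ := μ) hac hg
  refine le_trans ?_ (energy hδ hδ1 hh hτ hμ hμτ (v := vseq h τ μ g a) (a := a)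
    (fun y => rfl) cc hg ha (fun k y => rfl) K)
  have hδδ : δ * δ⁻¹ = 1 := mul_inv_cancel₀ hδ.ne'
  have cmp := compare hh hτ0.le (v := vseq h τ μ g a) (r := r) (g := g) (a := a) (μ := μ)
    (fun y => rfl) (fun y => (hr0 y).le) (fun k y => hδ.le.trans (ha k y).1)
    (fun k y => by
      have : τ / h ^ 2 = δ ^ 3 / 144 := by rw [hτ]; field_simp
      rw [this]
      have h1 : a k y * δ ^ 3 ≤ δ⁻¹ * δ ^ 3 := mul_le_mul_of_nonneg_right (ha k y).2 (by positivity)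
      have h2 : δ⁻¹ * δ ^ 3 = δ ^ 2 := by field_simp
      have h3 : δ ^ 2 ≤ 1 := pow_le_one₀ hδ.le hδ1.le
      nlinarith) hgn (fun k y => rfl) hr
  apply mul_le_mul_of_nonneg_left _ (sq_nonneg _)
  apply Finset.sum_le_sum
  intro k _
  apply integral_mono (hrc k).sq.int (cc k).sq.int
  intro y
  exact pow_le_pow_left₀ (hrn k y) (cmp k y).1 2

lemma averaging {F G : ℝ → ℝ} {R τ A C : ℝ} (hτ : 0 < τ) (hC : 0 ≤ C)
    (hF : Integrable F) (hG : Integrable G) (hGn : ∀ t, 0 ≤ G t) (hR : 0 < R)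
    (hFs : ∀ t, R ≤ |t| → F t = 0)
    (H : ∀ s, R ≤ s → ∀ K : ℕ, A * ∑ k ∈ Finset.range K, F (s - k * τ)
      ≤ C * ∑ k ∈ Finset.range K, G (s - k * τ)) :
    A * ∫ t, F t ≤ C * ∫ t, G t := by
  obtain ⟨K, hK⟩ := exists_nat_gt ((2 * R + τ) / τ)
  rw [div_lt_iff₀ hτ] at hK
  have key : ∀ f : ℝ → ℝ, Integrable f →
      ∫ s in R..(R + τ), ∑ k ∈ Finset.range K, f (s - k * τ) = ∫ t in (R + τ - K * τ)..(R + τ), f t := by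
    intro f hf
    rw [intervalIntegral.integral_finsetSum (fun k _ => (hf.comp_sub_right _).intervalIntegrable)]
    have e1 : ∀ k ∈ Finset.range K, ∫ s in R..(R + τ), f (s - k * τ) =
        - ∫ t in (R + τ - (k : ℕ) * τ)..(R + τ - (k + 1 : ℕ) * τ), f t := by
      intro k _
      rw [intervalIntegral.integral_comp_sub_right (fun s => f s), ← intervalIntegral.integral_symm]
      congr 1; push_cast; ring
    rw [Finset.sum_congr rfl e1, Finset.sum_neg_distrib,
      intervalIntegral.sum_integral_adjacent_intervals (a := fun k : ℕ => R + τ - k * τ)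
        (fun k _ => hf.intervalIntegrable), ← intervalIntegral.integral_symm]
    simp
  have i1 : A * ∫ t in (R + τ - K * τ)..(R + τ), F t ≤ C * ∫ t in (R + τ - K * τ)..(R + τ), G t := by
    rw [← key F hF, ← key G hG, ← intervalIntegral.integral_const_mul,
      ← intervalIntegral.integral_const_mul]
    have ii : ∀ f : ℝ → ℝ, Integrable f →
        IntervalIntegrable (fun s => ∑ k ∈ Finset.range K, f (s - k * τ)) volume R (R + τ) := by
      intro f hf
      exact (integrable_finsetSum _ fun k _ => hf.comp_sub_right _).intervalIntegrable
    apply intervalIntegral.integral_mono_on (by linarith) ((ii F hF).const_mul _) ((ii G hG).const_mul _)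
    intro s hs
    exact H s hs.1 K
  have i2 : ∫ t in (R + τ - K * τ)..(R + τ), F t = ∫ t, F t := by
    apply intervalIntegral.integral_eq_integral_of_support_subset
    intro t ht
    have : ¬ R ≤ |t| := fun h => ht (hFs t h)
    rw [not_le, abs_lt] at this
    constructor <;> linarith [this.1, this.2]
  have i3 : ∫ t in (R + τ - K * τ)..(R + τ), G t ≤ ∫ t, G t := by
    rw [intervalIntegral.integral_of_le (by linarith)]
    exact setIntegral_le_integral hG (Filter.Eventually.of_forall hGn)
  rw [i2] at i1
  exact i1.trans (mul_le_mul_of_nonneg_left i3 hC)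

lemma taylor1 {φ φ' : ℝ → ℂ} (h1 : ∀ x, HasDerivAt φ (φ' x) x) {x η ω : ℝ}
    (hu : ∀ s, |s| ≤ |η| → ‖φ' (x + s) - φ' x‖ ≤ ω) :
    ‖φ (x + η) - φ x - η * φ' x‖ ≤ ω * |η| := by
  have := Convex.norm_image_sub_le_of_norm_hasDerivWithin_le (𝕜 := ℝ) (C := ω)
    (s := Metric.closedBall (0 : ℝ) |η|)
    (f := fun s : ℝ => φ (x + s) - s * φ' x) (f' := fun s => φ' (x + s) - φ' x)
    (fun s hs => by
      apply HasDerivAt.hasDerivWithinAt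
      have a := (h1 (x + s)).comp_const_add x s
      have b := (Complex.ofRealCLM.hasDerivAt (x := s)).mul_const (φ' x)
      simpa using a.fun_sub b)
    (fun s hs => hu s (by simpa using hs)) (convex_closedBall _ _)
    (x := 0) (y := η) (by simp) (by simp)
  simp only [add_zero, Complex.ofReal_zero, zero_mul, sub_zero, Real.norm_eq_abs] at this
  have e : φ (x + η) - φ x - η * φ' x = φ (x + η) - η * φ' x - φ x := by ring
  rw [e]; exact this

lemma taylor2 {φ φ' φ'' : ℝ → ℂ} (h1 : ∀ x, HasDerivAt φ (φ' x) x)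
    (h2 : ∀ x, HasDerivAt φ' (φ'' x) x) {x η ω : ℝ} (hω : 0 ≤ ω)
    (hu : ∀ s, |s| ≤ |η| → ‖φ'' (x + s) - φ'' x‖ ≤ ω) :
    ‖φ (x + η) - φ x - η * φ' x - η ^ 2 / 2 * φ'' x‖ ≤ ω * η ^ 2 := by
  have := Convex.norm_image_sub_le_of_norm_hasDerivWithin_le (𝕜 := ℝ) (C := ω * |η|)
    (s := Metric.closedBall (0 : ℝ) |η|)
    (f := fun s : ℝ => φ (x + s) - s * φ' x - s ^ 2 / 2 * φ'' x)
    (f' := fun s => φ' (x + s) - φ' x - s * φ'' x)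
    (fun s hs => by
      apply HasDerivAt.hasDerivWithinAt
      have a := (h1 (x + s)).comp_const_add x s
      have b := (Complex.ofRealCLM.hasDerivAt (x := s)).mul_const (φ' x)
      have c := (((Complex.ofRealCLM.hasDerivAt (x := s)).fun_pow 2).div_const 2).mul_const (φ'' x)
      have d := (a.fun_sub b).fun_sub c
      refine (d.congr_deriv ?_)
      simp)
    (fun s hs => by
      have hs' : |s| ≤ |η| := by simpa using hs
      refine (taylor1 h2 (fun s' hs'' => hu s' (hs''.trans hs'))).trans ?_
      exact mul_le_mul_of_nonneg_left hs' hω) (convex_closedBall _ _)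
    (x := 0) (y := η) (by simp) (by simp)
  simp only [add_zero, Complex.ofReal_zero, zero_mul, sub_zero, Real.norm_eq_abs] at this
  have e : ω * |η| * |η| = ω * η ^ 2 := by rw [mul_assoc, abs_mul_abs_self]; ring
  rw [e] at this
  have e2 : φ (x + η) - φ x - η * φ' x - η ^ 2 / 2 * φ'' x
    = φ (x + η) - η * φ' x - η ^ 2 / 2 * φ'' x - φ x := by ring
  rw [e2]; simpa using this

lemma kato {δ X lam a b c h τ ω B M : ℝ} {W Wp Wm Wn Wt Wy Wyy f : ℂ} (hδ : 0 < δ) (hh : 0 < h)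
    (hτ : 0 < τ) (ha : δ ≤ a) (haδ : a ≤ δ⁻¹) (hb : b ^ 2 ≤ a * (c - δ * X)) (hbB : |b| ≤ B)
    (hb2 : b ^ 2 / a ≤ M)
    (hc : 0 ≤ 1 - 2 * a * (τ / h ^ 2) - (c + lam) * τ)
    (hf : f = Wt + a * Wyy + 2 * Complex.I * b * Wy - (c + lam) * W)
    (ht : ‖Wn - W + τ * Wt‖ ≤ ω * τ)
    (hyy : ‖Wp + Wm - 2 * W - h ^ 2 * Wyy‖ ≤ ω * h ^ 2)
    (hy : ‖Wp - Wm - 2 * h * Wy‖ ≤ ω * h)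
    (hp : ‖Wp‖ ≤ ‖W‖ + ω) (hm : ‖Wm‖ ≤ ‖W‖ + ω) :
    ‖Wn‖ ≤ ‖W‖ + τ * (a * ((‖Wp‖ + ‖Wm‖ - 2 * ‖W‖) / h ^ 2) - (δ * X + lam) * ‖W‖
      + (‖f‖ + ω * (1 + δ⁻¹ + B + M))) := by
  have ha0 : 0 < a := hδ.trans_le ha
  have hω : 0 ≤ ω := by
    have := (norm_nonneg _).trans ht
    exact nonneg_of_mul_nonneg_left this hτ
  have hB0 : 0 ≤ B := (abs_nonneg b).trans hbB
  set s := τ / h ^ 2 with hs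
  have hs0 : 0 < s := by positivity
  have hτs : τ = s * h ^ 2 := by rw [hs]; field_simp
  set β := a + b ^ 2 * h ^ 2 / (2 * a) with hβ
  have nrm : ∀ b' : ℝ, b' ^ 2 = b ^ 2 → ‖(a : ℂ) + b' * h * Complex.I‖ ≤ β := by
    intro b' hb'
    have hβ0 : 0 ≤ β := by positivity
    rw [← abs_of_nonneg hβ0, ← sq_le_sq₀ (norm_nonneg _) (abs_nonneg _), sq_abs]
    have := Complex.sq_norm ((a : ℂ) + b' * h * Complex.I)
    rw [this, Complex.normSq_apply]
    simp
    have : β ^ 2 = a ^ 2 + b ^ 2 * h ^ 2 + (b ^ 2 * h ^ 2 / (2 * a)) ^ 2 := by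
      rw [hβ]; field_simp; ring
    rw [this]
    nlinarith [sq_nonneg (b ^ 2 * h ^ 2 / (2 * a))]
  have id : Wn = ((1 - 2 * a * s - (c + lam) * τ : ℝ) : ℂ) * W
      + s * (((a : ℂ) + b * h * Complex.I) * Wp) + s * (((a : ℂ) + (-b : ℝ) * h * Complex.I) * Wm)
      - τ * f + ((Wn - W + τ * Wt) - s * a * (Wp + Wm - 2 * W - h ^ 2 * Wyy)
        - s * b * h * Complex.I * (Wp - Wm - 2 * h * Wy)) := by
    rw [hf, hτs]; push_cast; ring
  have n1 : ‖((1 - 2 * a * s - (c + lam) * τ : ℝ) : ℂ) * W‖ = (1 - 2 * a * s - (c + lam) * τ) * ‖W‖ := by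
    rw [norm_mul, Complex.norm_real, Real.norm_of_nonneg hc]
  have n2 : ‖s * (((a : ℂ) + b * h * Complex.I) * Wp)‖ ≤ s * (β * ‖Wp‖) := by
    rw [norm_mul, norm_mul, Complex.norm_real, Real.norm_of_nonneg hs0.le]
    gcongr; exact nrm b rfl
  have n3 : ‖s * (((a : ℂ) + (-b : ℝ) * h * Complex.I) * Wm)‖ ≤ s * (β * ‖Wm‖) := by
    rw [norm_mul, norm_mul, Complex.norm_real, Real.norm_of_nonneg hs0.le]
    gcongr; exact nrm (-b) (by ring)
  have n4 : ‖τ * f‖ = τ * ‖f‖ := by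
    rw [norm_mul, Complex.norm_real, Real.norm_of_nonneg hτ.le]
  have n5 : ‖s * a * (Wp + Wm - 2 * W - h ^ 2 * Wyy)‖ ≤ s * δ⁻¹ * (ω * h ^ 2) := by
    rw [norm_mul, norm_mul, Complex.norm_real, Complex.norm_real, Real.norm_of_nonneg hs0.le,
      Real.norm_of_nonneg ha0.le]
    gcongr
  have n6 : ‖s * b * h * Complex.I * (Wp - Wm - 2 * h * Wy)‖ ≤ s * B * h * (ω * h) := by
    rw [norm_mul, norm_mul, norm_mul, norm_mul, Complex.norm_real, Complex.norm_real,
      Complex.norm_real, Real.norm_of_nonneg hs0.le, Real.norm_of_nonneg hh.le, Complex.norm_I,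
      Real.norm_eq_abs, mul_one]
    gcongr
  have tot : ‖Wn‖ ≤ (1 - 2 * a * s - (c + lam) * τ) * ‖W‖ + s * (β * ‖Wp‖) + s * (β * ‖Wm‖)
      + τ * ‖f‖ + (ω * τ + s * δ⁻¹ * (ω * h ^ 2) + s * B * h * (ω * h)) := by
    conv_lhs => rw [id]
    refine (norm_add_le _ _).trans (add_le_add ?_ ?_)
    · refine (norm_sub_le _ _).trans (add_le_add ?_ n4.le)
      refine (norm_add_le _ _).trans (add_le_add ?_ n3)
      exact (norm_add_le _ _).trans (add_le_add n1.le n2)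
    · refine (norm_sub_le _ _).trans (add_le_add ?_ n6)
      exact (norm_sub_le _ _).trans (add_le_add ht n5)
  refine tot.trans ?_
  have hba : b ^ 2 / a ≤ c - δ * X := by rw [div_le_iff₀ ha0]; linarith
  have q : s * (β * ‖Wp‖) + s * (β * ‖Wm‖) ≤ s * a * (‖Wp‖ + ‖Wm‖) + τ * ((c - δ * X) * ‖W‖ + M * ω) := by
    have e : s * (β * ‖Wp‖) + s * (β * ‖Wm‖) = s * a * (‖Wp‖ + ‖Wm‖)
        + τ * ((b ^ 2 / a) * ((‖Wp‖ + ‖Wm‖) / 2)) := by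
      rw [hβ, hτs]; field_simp
    rw [e]
    gcongr
    have p0 : 0 ≤ b ^ 2 / a := by positivity
    calc (b ^ 2 / a) * ((‖Wp‖ + ‖Wm‖) / 2) ≤ (b ^ 2 / a) * (‖W‖ + ω) := by
          gcongr; linarith
      _ = (b ^ 2 / a) * ‖W‖ + (b ^ 2 / a) * ω := by ring
      _ ≤ _ := by gcongr
  have e2 : τ * (a * ((‖Wp‖ + ‖Wm‖ - 2 * ‖W‖) / h ^ 2)) = s * a * (‖Wp‖ + ‖Wm‖) - 2 * a * s * ‖W‖ := by
    rw [hs]; field_simp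
  have e3 : s * δ⁻¹ * (ω * h ^ 2) = τ * (δ⁻¹ * ω) := by rw [hτs]; ring
  have e4 : s * B * h * (ω * h) = τ * (B * ω) := by rw [hτs]; ring
  rw [mul_add τ, mul_sub τ, e2, e3, e4]
  nlinarith


lemma slice_CC {F : ℝ × ℝ → ℝ} (hc : Continuous F) (hs : HasCompactSupport F) (t : ℝ) :
    CC (fun y => F (t, y)) := by
  refine ⟨by fun_prop, ?_⟩
  obtain ⟨R, hR, h⟩ := hs.exists_pos_le_norm
  apply HasCompactSupport.intro (isCompact_closedBall (0 : ℝ) R)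
  intro y hy
  apply h
  have : R < ‖y‖ := by simpa using hy
  exact this.le.trans (norm_snd_le (t, y))

lemma unif {F : ℝ × ℝ → ℂ} (hc : Continuous F) (hs : HasCompactSupport F) {ω : ℝ} (hω : 0 < ω) :
    ∃ η > 0, (∀ t y s, |s| < η → ‖F (t, y + s) - F (t, y)‖ ≤ ω) ∧
      (∀ t y s, |s| < η → ‖F (t + s, y) - F (t, y)‖ ≤ ω) := by
  have := hs.uniformContinuous_of_continuous hc
  rw [Metric.uniformContinuous_iff] at this
  obtain ⟨η, hη, h⟩ := this ω hω
  refine ⟨η, hη, ?_, ?_⟩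
  · intro t y s hs
    rw [← dist_eq_norm]
    apply (h _).le
    simp [Prod.dist_eq, hs]
  · intro t y s hs
    rw [← dist_eq_norm]
    apply (h _).le
    simp [Prod.dist_eq, hs]

set_option maxHeartbeats 1000000 in
theorem l2bound_eps {δ X lam : ℝ} (hδ : 0 < δ) (hδ1 : δ < 1) (hX : 0 ≤ X) (hlam : 0 ≤ lam)
    {a b c : ℝ × ℝ → ℝ} (hac : Continuous a) (ha : ∀ q, δ ≤ a q ∧ a q ≤ δ⁻¹)
    (hb : ∀ q, b q ^ 2 ≤ a q * (c q - δ * X)) (hcX : ∀ q, c q ≤ δ⁻¹ * X)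
    {w wt wy wyy f : ℝ × ℝ → ℂ}
    (cw : Continuous w) (sw : HasCompactSupport w) (cwt : Continuous wt) (swt : HasCompactSupport wt)
    (cwy : Continuous wy) (swy : HasCompactSupport wy)
    (cwyy : Continuous wyy) (swyy : HasCompactSupport wyy)
    (cf : Continuous f) (sf : HasCompactSupport f)
    (dt : ∀ t y, HasDerivAt (fun s => w (s, y)) (wt (t, y)) t)
    (dy : ∀ t y, HasDerivAt (fun z => w (t, z)) (wy (t, y)) y)
    (dyy : ∀ t y, HasDerivAt (fun z => wy (t, z)) (wyy (t, y)) y)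
    (hf : ∀ q, f q = wt q + a q * wyy q + 2 * Complex.I * b q * wy q - (c q + lam) * w q)
    {R : ℝ} (hR : 0 < R) (hwR : ∀ q, R ≤ ‖q‖ → w q = 0)
    {χ : ℝ × ℝ → ℝ} (cχ : Continuous χ) (sχ : HasCompactSupport χ) (χ0 : ∀ q, 0 ≤ χ q)
    (χ1 : ∀ q, ‖q‖ ≤ R + 1 → χ q = 1) {ε : ℝ} (hε : 0 < ε) :
    (δ * X + lam) ^ 2 * ∫ q, ‖w q‖ ^ 2 ≤ 35 * δ⁻¹ ^ 4 * ∫ q, (‖f q‖ + ε * χ q) ^ 2 := by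
  have δi : 0 < δ⁻¹ := inv_pos.mpr hδ
  have δi1 : 1 ≤ δ⁻¹ := (one_le_inv₀ hδ).mpr hδ1.le
  set B := δ⁻¹ * (1 + X) with hB
  set M := δ⁻¹ * X with hM
  set Q := 1 + δ⁻¹ + B + M with hQ
  have hQ0 : 0 < Q := by positivity
  set ω := ε / Q with hω
  have hω0 : 0 < ω := by positivity
  obtain ⟨η1, hη1, u1, -⟩ := unif cw sw hω0
  obtain ⟨η2, hη2, -, u2⟩ := unif cwt swt hω0
  obtain ⟨η3, hη3, u3, -⟩ := unif cwy swy (half_pos hω0)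
  obtain ⟨η4, hη4, u4, -⟩ := unif cwyy swyy (half_pos hω0)
  set h5 := 1 / (6 * (M + lam + 1)) with hh5
  have hM0 : 0 ≤ M := by positivity
  obtain ⟨h, hh, hmin⟩ : ∃ h : ℝ, 0 < h ∧ h < min (min (min η1 η2) (min η3 η4)) (min 1 h5) :=
    exists_between (by
      have : 0 < h5 := by positivity
      exact lt_min (lt_min (lt_min hη1 hη2) (lt_min hη3 hη4)) (lt_min one_pos this))
  simp only [lt_min_iff] at hmin
  obtain ⟨⟨⟨m1, m2⟩, m3, m4⟩, m5, m6⟩ := hmin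
  set τ := δ ^ 3 / 144 * h ^ 2 with hτ
  have hτ0 : 0 < τ := by positivity
  have hδ3 : δ ^ 3 ≤ 1 := pow_le_one₀ hδ.le hδ1.le
  have hτh : τ ≤ h := by
    have : h ^ 2 ≤ h := by nlinarith
    nlinarith [sq_nonneg h]
  have hMl : (M + lam) * τ ≤ 1 / 6 := by
    have : (M + lam + 1) * h5 = 1 / 6 := by rw [hh5]; field_simp
    nlinarith
  have hδM : δ * X ≤ M := by
    apply mul_le_mul_of_nonneg_right _ hX; linarith
  have hμτ : (δ * X + lam) * τ ≤ 1 / 6 := by nlinarith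
  have hbM : ∀ q, b q ^ 2 / a q ≤ M := by
    intro q
    have p : 0 < a q := hδ.trans_le (ha q).1
    rw [div_le_iff₀ p]
    refine (hb q).trans ?_
    rw [mul_comm]
    apply mul_le_mul_of_nonneg_right _ p.le
    have := hcX q; nlinarith
  have hbB : ∀ q, |b q| ≤ B := by
    intro q
    have p : 0 < a q := hδ.trans_le (ha q).1
    apply abs_le_of_sq_le_sq _ (by positivity)
    have h1 := hbM q
    rw [div_le_iff₀ p] at h1
    have h2 : M * a q ≤ M * δ⁻¹ := mul_le_mul_of_nonneg_left (ha q).2 hM0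
    have h3 : M * δ⁻¹ ≤ B ^ 2 := by
      have : B ^ 2 - M * δ⁻¹ = δ⁻¹ ^ 2 * (1 + X + X ^ 2) := by rw [hB, hM]; ring
      have : 0 ≤ δ⁻¹ ^ 2 * (1 + X + X ^ 2) := by positivity
      linarith
    linarith
  have cg : Continuous fun q => ‖f q‖ + ε * χ q := by fun_prop
  have sg : HasCompactSupport fun q => ‖f q‖ + ε * χ q := sf.norm.add sχ.mul_left
  have g0 : ∀ q, 0 ≤ ‖f q‖ + ε * χ q := fun q => by have := χ0 q; positivity
  have cw2 : Continuous fun q => ‖w q‖ := cw.norm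
  have sw2 : HasCompactSupport fun q => ‖w q‖ := sw.norm
  have iw : Integrable (fun q => ‖w q‖ ^ 2) (volume.prod volume) :=
    (cw2.pow 2).integrable_of_hasCompactSupport
      (by simpa only [pow_two] using sw2.mul_right (f' := fun q => ‖w q‖))
  have ig : Integrable (fun q => (‖f q‖ + ε * χ q) ^ 2) (volume.prod volume) :=
    (cg.pow 2).integrable_of_hasCompactSupport
      (by simpa only [pow_two] using sg.mul_right (f' := fun q => ‖f q‖ + ε * χ q))
  rw [Measure.volume_eq_prod, integral_prod _ iw, integral_prod _ ig]
  apply averaging hτ0 (by positivity) iw.integral_prod_left ig.integral_prod_left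
    (fun t => integral_nonneg fun y => sq_nonneg _) hR
  · intro t ht
    have : ∀ y, w (t, y) = 0 := fun y => hwR _ (ht.trans (norm_fst_le (t, y)))
    simp [this]
  intro s hs K
  apply scheme hδ hδ1 hh hτ (by positivity) hμτ
    (r := fun k y => ‖w (s - k * τ, y)‖) (g := fun k y => ‖f (s - k * τ, y)‖ + ε * χ (s - k * τ, y))
    (a := fun k y => a (s - k * τ, y))
  · intro y
    have : w (s - (0 : ℕ) * τ, y) = 0 := by
      apply hwR
      refine le_trans ?_ (norm_fst_le _)
      simp only [Nat.cast_zero, zero_mul, sub_zero]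
      exact hs.trans (le_abs_self s)
    rw [this]; simp
  · intro k y; positivity
  · intro k; exact slice_CC cw2 sw2 _
  · intro k; exact slice_CC cg sg _
  · intro k y; exact g0 _
  · intro k; fun_prop
  · intro k y; exact ha _
  intro k y
  set t := s - k * τ with ht
  have ht' : s - ((k + 1 : ℕ) : ℝ) * τ = t - τ := by rw [ht]; push_cast; ring
  simp only [ht']
  by_cases hw : w (t - τ, y) = 0
  · left; simp [hw]
  right
  have hχ : χ (t, y) = 1 := by
    apply χ1
    have h1 : ‖(t - τ, y)‖ < R := by
      by_contra hcon; exact hw (hwR _ (not_lt.mp hcon))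
    rw [Prod.norm_def, max_lt_iff] at h1
    rw [Prod.norm_def, max_le_iff]
    simp only [Real.norm_eq_abs] at h1 ⊢
    constructor
    · have : |t| ≤ |t - τ| + |τ| := by
        have := abs_add_le (t - τ) τ
        simpa using this
      rw [abs_of_pos hτ0] at this
      linarith [h1.1]
    · linarith [h1.2]
  have habs : |h| = h := abs_of_pos hh
  have hK := kato (δ := δ) (X := X) (lam := lam) (a := a (t, y)) (b := b (t, y)) (c := c (t, y))
    (h := h) (τ := τ) (ω := ω) (B := B) (M := M) (W := w (t, y)) (Wp := w (t, y + h))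
    (Wm := w (t, y - h)) (Wn := w (t - τ, y)) (Wt := wt (t, y)) (Wy := wy (t, y)) (Wyy := wyy (t, y))
    (f := f (t, y)) hδ hh hτ0 (ha _).1 (ha _).2 (hb _) (hbB _) (hbM _)
    (by
      have : τ / h ^ 2 = δ ^ 3 / 144 := by rw [hτ]; field_simp
      rw [this]
      have h1 : a (t, y) * δ ^ 3 ≤ δ⁻¹ * δ ^ 3 := mul_le_mul_of_nonneg_right (ha _).2 (by positivity)
      have h2 : δ⁻¹ * δ ^ 3 = δ ^ 2 := by field_simp
      have h3 : δ ^ 2 ≤ 1 := pow_le_one₀ hδ.le hδ1.le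
      have h4 : (c (t, y) + lam) * τ ≤ (M + lam) * τ :=
        mul_le_mul_of_nonneg_right (by linarith [hcX (t, y)]) hτ0.le
      nlinarith)
    (hf _)
    (by
      have := taylor1 (φ := fun s => w (s, y)) (φ' := fun s => wt (s, y)) (fun x => dt x y)
        (x := t) (η := -τ) (ω := ω) (fun s' hs' => u2 t y s' (by
          rw [abs_neg, abs_of_pos hτ0] at hs'; linarith))
      rw [abs_neg, abs_of_pos hτ0] at this
      simpa [sub_eq_add_neg] using this)
    (by
      have p := taylor2 (φ := fun z => w (t, z)) (φ' := fun z => wy (t, z)) (φ'' := fun z => wyy (t, z))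
        (fun z => dy t z) (fun z => dyy t z) (x := y) (η := h) (half_pos hω0).le
        (fun s' hs' => u4 t y s' (by rw [habs] at hs'; linarith))
      have m := taylor2 (φ := fun z => w (t, z)) (φ' := fun z => wy (t, z)) (φ'' := fun z => wyy (t, z))
        (fun z => dy t z) (fun z => dyy t z) (x := y) (η := -h) (half_pos hω0).le
        (fun s' hs' => u4 t y s' (by rw [abs_neg, habs] at hs'; linarith))
      have := (norm_add_le _ _).trans (add_le_add p m)
      have e : ω / 2 * h ^ 2 + ω / 2 * (-h) ^ 2 = ω * h ^ 2 := by ring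
      rw [e] at this
      refine le_of_eq_of_le (congrArg norm ?_) this
      rw [← sub_eq_add_neg]; push_cast; ring)
    (by
      have p := taylor1 (φ := fun z => w (t, z)) (φ' := fun z => wy (t, z))
        (fun z => dy t z) (x := y) (η := h) (ω := ω / 2)
        (fun s' hs' => u3 t y s' (by rw [habs] at hs'; linarith))
      have m := taylor1 (φ := fun z => w (t, z)) (φ' := fun z => wy (t, z))
        (fun z => dy t z) (x := y) (η := -h) (ω := ω / 2)
        (fun s' hs' => u3 t y s' (by rw [abs_neg, habs] at hs'; linarith))
      have := (norm_sub_le _ _).trans (add_le_add p m)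
      have e : ω / 2 * |h| + ω / 2 * |-h| = ω * h := by rw [abs_neg, habs]; ring
      rw [e] at this
      refine le_of_eq_of_le (congrArg norm ?_) this
      rw [← sub_eq_add_neg]; push_cast; ring)
    (by
      have := u1 t y h (by rw [habs]; linarith)
      have := norm_sub_norm_le (w (t, y + h)) (w (t, y))
      linarith)
    (by
      have := u1 t y (-h) (by rw [abs_neg, habs]; linarith)
      rw [← sub_eq_add_neg] at this
      have := norm_sub_norm_le (w (t, y - h)) (w (t, y))
      linarith)
  have hωQ : ω * Q = ε := by rw [hω]; field_simp
  rw [← hQ, hωQ] at hK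
  simp only [hχ, mul_one]
  exact hK

theorem l2bound {δ X lam : ℝ} (hδ : 0 < δ) (hδ1 : δ < 1) (hX : 0 ≤ X) (hlam : 0 ≤ lam)
    {a b c : ℝ × ℝ → ℝ} (hac : Continuous a) (ha : ∀ q, δ ≤ a q ∧ a q ≤ δ⁻¹)
    (hb : ∀ q, b q ^ 2 ≤ a q * (c q - δ * X)) (hcX : ∀ q, c q ≤ δ⁻¹ * X)
    {w wt wy wyy f : ℝ × ℝ → ℂ}
    (cw : Continuous w) (sw : HasCompactSupport w) (cwt : Continuous wt) (swt : HasCompactSupport wt)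
    (cwy : Continuous wy) (swy : HasCompactSupport wy)
    (cwyy : Continuous wyy) (swyy : HasCompactSupport wyy)
    (cf : Continuous f) (sf : HasCompactSupport f)
    (dt : ∀ t y, HasDerivAt (fun s => w (s, y)) (wt (t, y)) t)
    (dy : ∀ t y, HasDerivAt (fun z => w (t, z)) (wy (t, y)) y)
    (dyy : ∀ t y, HasDerivAt (fun z => wy (t, z)) (wyy (t, y)) y)
    (hf : ∀ q, f q = wt q + a q * wyy q + 2 * Complex.I * b q * wy q - (c q + lam) * w q) :
    (δ * X + lam) ^ 2 * ∫ q, ‖w q‖ ^ 2 ≤ 70 * δ⁻¹ ^ 4 * ∫ q, ‖f q‖ ^ 2 := by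
  obtain ⟨R, hR, hwR⟩ := sw.exists_pos_le_norm
  set χ : ℝ × ℝ → ℝ := fun q => max 0 (min 1 (R + 2 - ‖q‖)) with hχ
  have cχ : Continuous χ := by fun_prop
  have sχ : HasCompactSupport χ := by
    apply HasCompactSupport.intro (isCompact_closedBall (0 : ℝ × ℝ) (R + 2))
    intro q hq
    have : R + 2 < ‖q‖ := by simpa using hq
    simp only [hχ]
    apply max_eq_left
    apply (min_le_right _ _).trans
    linarith
  have χ0 : ∀ q, 0 ≤ χ q := fun q => le_max_left _ _
  have χ1 : ∀ q, ‖q‖ ≤ R + 1 → χ q = 1 := by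
    intro q hq
    simp only [hχ]
    rw [min_eq_left (by linarith)]; simp
  have δi : 0 < δ⁻¹ := inv_pos.mpr hδ
  have i1 : Integrable (fun q => ‖f q‖ ^ 2) :=
    (cf.norm.pow 2).integrable_of_hasCompactSupport
      (by simpa only [pow_two] using sf.norm.mul_right (f' := fun q => ‖f q‖))
  have i2 : Integrable (fun q => χ q ^ 2) :=
    (cχ.pow 2).integrable_of_hasCompactSupport
      (by simpa only [pow_two] using sχ.mul_right (f' := χ))
  have key : ∀ ε > 0, (δ * X + lam) ^ 2 * ∫ q, ‖w q‖ ^ 2 ≤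
      70 * δ⁻¹ ^ 4 * (∫ q, ‖f q‖ ^ 2) + ε ^ 2 * (70 * δ⁻¹ ^ 4 * ∫ q, χ q ^ 2) := by
    intro ε hε
    refine (l2bound_eps hδ hδ1 hX hlam hac ha hb hcX cw sw cwt swt cwy swy cwyy swyy cf sf dt dy dyy
      hf hR hwR cχ sχ χ0 χ1 hε).trans ?_
    have : ∫ q, (‖f q‖ + ε * χ q) ^ 2 ≤ 2 * (∫ q, ‖f q‖ ^ 2) + (2 * ε ^ 2) * ∫ q, χ q ^ 2 := by
      rw [← integral_const_mul, ← integral_const_mul, ← integral_add (i1.const_mul _) (i2.const_mul _)]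
      apply integral_mono_of_nonneg (Filter.Eventually.of_forall fun q => sq_nonneg _)
        ((i1.const_mul _).add (i2.const_mul _))
      refine Filter.Eventually.of_forall fun q => ?_
      simp only [Pi.add_apply]
      nlinarith [sq_nonneg (‖f q‖ - ε * χ q)]
    have := mul_le_mul_of_nonneg_left this (by positivity : 0 ≤ 35 * δ⁻¹ ^ 4)
    linarith
  have lim : Filter.Tendsto (fun ε : ℝ => 70 * δ⁻¹ ^ 4 * (∫ q, ‖f q‖ ^ 2)
      + ε ^ 2 * (70 * δ⁻¹ ^ 4 * ∫ q, χ q ^ 2)) (nhdsWithin 0 (Set.Ioi 0))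
      (nhds (70 * δ⁻¹ ^ 4 * (∫ q, ‖f q‖ ^ 2))) := by
    apply tendsto_nhdsWithin_of_tendsto_nhds
    have : Continuous (fun ε : ℝ => 70 * δ⁻¹ ^ 4 * (∫ q, ‖f q‖ ^ 2)
      + ε ^ 2 * (70 * δ⁻¹ ^ 4 * ∫ q, χ q ^ 2)) := by fun_prop
    simpa using this.tendsto 0
  apply ge_of_tendsto lim
  filter_upwards [self_mem_nhdsWithin] with ε hε
  exact key ε hε


lemma int_dy {P P' : ℝ × ℝ → ℝ} (c : Continuous P) (s : HasCompactSupport P)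
    (c' : Continuous P') (s' : HasCompactSupport P')
    (d : ∀ t y, HasDerivAt (fun z => P (t, z)) (P' (t, y)) y) : ∫ q, P' q = 0 := by
  rw [Measure.volume_eq_prod, integral_prod _ (c'.integrable_of_hasCompactSupport s')]
  have : ∀ t, ∫ y, P' (t, y) = 0 := fun t =>
    integral_eq_zero_of_hasDerivAt_of_integrable (d t) (slice_CC c' s' t).int (slice_CC c s t).int
  simp [this]

lemma int_dt {P P' : ℝ × ℝ → ℝ} (c : Continuous P) (s : HasCompactSupport P)
    (c' : Continuous P') (s' : HasCompactSupport P')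
    (d : ∀ t y, HasDerivAt (fun z => P (z, y)) (P' (t, y)) t) : ∫ q, P' q = 0 := by
  have e := integral_prod_swap (μ := (volume : Measure ℝ)) (ν := (volume : Measure ℝ)) P'
  rw [Measure.volume_eq_prod, ← e, ← Measure.volume_eq_prod]
  exact int_dy (P := fun q => P q.swap) (P' := fun q => P' q.swap) (c.comp continuous_swap)
    (s.comp_homeomorph (Homeomorph.prodComm ℝ ℝ)) (c'.comp continuous_swap)
    (s'.comp_homeomorph (Homeomorph.prodComm ℝ ℝ)) (fun t y => d y t)

lemma cs_inner {F G : ℝ × ℝ → ℂ} (s : HasCompactSupport F) :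
    HasCompactSupport fun q => inner ℝ (F q) (G q) := by
  apply s.mono
  intro q hq h0
  exact hq (by simp [h0])

lemma int_inner {F G : ℝ × ℝ → ℂ} (cF : Continuous F) (s : HasCompactSupport F) (cG : Continuous G) :
    Integrable fun q => inner ℝ (F q) (G q) :=
  (cF.inner cG).integrable_of_hasCompactSupport (cs_inner s)

lemma int_sq {F : ℝ × ℝ → ℂ} (cF : Continuous F) (s : HasCompactSupport F) :
    Integrable fun q => ‖F q‖ ^ 2 := by
  simpa using int_inner cF s cF

lemma full_arith {δ X lam D μ St Syy Sy Sw Sf : ℝ} (hδ : 0 < δ) (hδ1 : δ < 1) (hX : 0 ≤ X)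
    (hlam : 0 ≤ lam) (hD1 : 1 ≤ D) (hDδ : δ * D = 1) (hμ0 : 0 ≤ μ) (hZμ : X + lam ≤ D * μ)
    (St0 : 0 ≤ St) (Syy0 : 0 ≤ Syy) (Sy0 : 0 ≤ Sy) (Sw0 : 0 ≤ Sw) (Sf0 : 0 ≤ Sf)
    (L : μ ^ 2 * Sw ≤ 70 * D ^ 4 * Sf)
    (P' : δ * St + δ * Syy ≤ 3 * D * Sf + 12 * D ^ 3 * X * Sy + 3 * D ^ 5 * μ ^ 2 * Sw)
    (Q : (X + lam) * Sy ≤ δ ^ 4 / 24 * Syy + 6 * D ^ 4 * (X + lam) ^ 2 * Sw) :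
    St + Syy + (X ^ 2 + lam ^ 2) * Sw + (X + lam) * Sy ≤ 25000 * D ^ 14 * Sf := by
  have hD0 : 0 < D := by linarith
  have mono : ∀ i j : ℕ, i ≤ j → D ^ i * Sf ≤ D ^ j * Sf := fun i j hij =>
    mul_le_mul_of_nonneg_right (pow_le_pow_right₀ hD1 hij) Sf0
  have ZSw : (X + lam) ^ 2 * Sw ≤ 70 * D ^ 6 * Sf := by
    have h1 : (X + lam) ^ 2 ≤ (D * μ) ^ 2 := pow_le_pow_left₀ (by positivity) hZμ 2
    have h2 := mul_le_mul_of_nonneg_right h1 Sw0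
    have h3 := mul_le_mul_of_nonneg_left L (sq_nonneg D)
    calc _ ≤ _ := h2
      _ = D ^ 2 * (μ ^ 2 * Sw) := by ring
      _ ≤ _ := h3
      _ = _ := by ring
  have ZSy : (X + lam) * Sy ≤ δ ^ 4 / 24 * Syy + 420 * D ^ 10 * Sf := by
    have := mul_le_mul_of_nonneg_left ZSw (by positivity : 0 ≤ 6 * D ^ 4)
    calc _ ≤ _ := Q
      _ = δ ^ 4 / 24 * Syy + 6 * D ^ 4 * ((X + lam) ^ 2 * Sw) := by ring
      _ ≤ δ ^ 4 / 24 * Syy + 6 * D ^ 4 * (70 * D ^ 6 * Sf) := by linarith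
      _ = _ := by ring
  have XSy : X * Sy ≤ (X + lam) * Sy := mul_le_mul_of_nonneg_right (by linarith) Sy0
  have T1 : 12 * D ^ 3 * X * Sy ≤ δ / 2 * Syy + 5040 * D ^ 13 * Sf := by
    have := mul_le_mul_of_nonneg_left (XSy.trans ZSy) (by positivity : 0 ≤ 12 * D ^ 3)
    calc _ = 12 * D ^ 3 * (X * Sy) := by ring
      _ ≤ _ := this
      _ = (δ * D) ^ 3 * δ / 2 * Syy + 5040 * D ^ 13 * Sf := by ring
      _ = _ := by rw [hDδ]; ring
  have T2 : 3 * D ^ 5 * μ ^ 2 * Sw ≤ 210 * D ^ 9 * Sf := by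
    have := mul_le_mul_of_nonneg_left L (by positivity : 0 ≤ 3 * D ^ 5)
    calc _ = 3 * D ^ 5 * (μ ^ 2 * Sw) := by ring
      _ ≤ _ := this
      _ = _ := by ring
  have m1 := mono 1 13 (by norm_num)
  have m9 := mono 9 13 (by norm_num)
  have T3 : δ * (St + Syy) ≤ 12000 * D ^ 13 * Sf := by
    have h1 := mul_nonneg hδ.le St0
    have h2 : 0 ≤ D ^ 13 * Sf := by positivity
    rw [pow_one] at m1
    linarith
  have T4 : St + Syy ≤ 12000 * D ^ 14 * Sf := by
    have := mul_le_mul_of_nonneg_left T3 hD0.le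
    calc St + Syy = (δ * D) * (St + Syy) := by rw [hDδ]; ring
      _ = D * (δ * (St + Syy)) := by ring
      _ ≤ _ := this
      _ = _ := by ring
  have m6 := mono 6 14 (by norm_num)
  have m10 := mono 10 14 (by norm_num)
  have T5 : (X ^ 2 + lam ^ 2) * Sw ≤ (X + lam) ^ 2 * Sw :=
    mul_le_mul_of_nonneg_right (by nlinarith) Sw0
  have T6 : δ ^ 4 / 24 * Syy ≤ Syy := by
    have : δ ^ 4 ≤ 1 := pow_le_one₀ hδ.le hδ1.le
    nlinarith
  have h2 : 0 ≤ D ^ 14 * Sf := by positivity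
  linarith

set_option maxHeartbeats 1000000 in
theorem full {δ X lam : ℝ} (hδ : 0 < δ) (hδ1 : δ < 1) (hX : 0 ≤ X) (hlam : 0 ≤ lam)
    {a b c : ℝ × ℝ → ℝ} (hac : Continuous a) (ha : ∀ q, δ ≤ a q ∧ a q ≤ δ⁻¹)
    (hb : ∀ q, b q ^ 2 ≤ a q * (c q - δ * X)) (hcX : ∀ q, c q ≤ δ⁻¹ * X)
    {w wt wy wyy wty f : ℝ × ℝ → ℂ}
    (cw : Continuous w) (sw : HasCompactSupport w) (cwt : Continuous wt) (swt : HasCompactSupport wt)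
    (cwy : Continuous wy) (swy : HasCompactSupport wy)
    (cwyy : Continuous wyy) (swyy : HasCompactSupport wyy)
    (cwty : Continuous wty) (swty : HasCompactSupport wty)
    (cf : Continuous f) (sf : HasCompactSupport f)
    (dt : ∀ t y, HasDerivAt (fun s => w (s, y)) (wt (t, y)) t)
    (dy : ∀ t y, HasDerivAt (fun z => w (t, z)) (wy (t, y)) y)
    (dyy : ∀ t y, HasDerivAt (fun z => wy (t, z)) (wyy (t, y)) y)
    (dyt : ∀ t y, HasDerivAt (fun s => wy (s, y)) (wty (t, y)) t)
    (dty : ∀ t y, HasDerivAt (fun z => wt (t, z)) (wty (t, y)) y)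
    (hf : ∀ q, f q = wt q + a q * wyy q + 2 * Complex.I * b q * wy q - (c q + lam) * w q) :
    (∫ q, ‖wt q‖ ^ 2) + (∫ q, ‖wyy q‖ ^ 2) + (X ^ 2 + lam ^ 2) * (∫ q, ‖w q‖ ^ 2)
      + (X + lam) * (∫ q, ‖wy q‖ ^ 2) ≤ 25000 * δ⁻¹ ^ 14 * ∫ q, ‖f q‖ ^ 2 := by
  have L := l2bound hδ hδ1 hX hlam hac ha hb hcX cw sw cwt swt cwy swy cwyy swyy cf sf dt dy dyy hf
  have j1 := int_inner cwt swt cwyy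
  have j2 := int_inner cwty swty cwy
  have j3 := int_inner cw sw cwyy
  have it := int_sq cwt swt
  have iyy := int_sq cwyy swyy
  have iy := int_sq cwy swy
  have iw := int_sq cw sw
  have jf := int_sq cf sf
  have Z1 : ∫ q, inner ℝ (wt q) (wyy q) = 0 := by
    have h1 : ∫ q, (inner ℝ (wt q) (wyy q) + inner ℝ (wty q) (wy q)) = 0 :=
      int_dy (P := fun q => inner ℝ (wt q) (wy q)) (cwt.inner cwy) (cs_inner swt)
        ((cwt.inner cwyy).add (cwty.inner cwy)) ((cs_inner swt).add (cs_inner swty))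
        (fun t y => (dty t y).inner ℝ (dyy t y))
    have h2 : ∫ q, (inner ℝ (wy q) (wty q) + inner ℝ (wty q) (wy q)) = 0 :=
      int_dt (P := fun q => inner ℝ (wy q) (wy q)) (cwy.inner cwy) (cs_inner swy)
        ((cwy.inner cwty).add (cwty.inner cwy)) ((cs_inner swy).add (cs_inner swty))
        (fun t y => (dyt t y).inner ℝ (dyt t y))
    have e : ∀ q, inner ℝ (wy q) (wty q) = inner ℝ (wty q) (wy q) := fun q => real_inner_comm _ _
    simp only [e] at h2
    rw [integral_add j1 j2] at h1
    rw [integral_add j2 j2] at h2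
    linarith
  have Z2 : (∫ q, inner ℝ (w q) (wyy q)) + ∫ q, ‖wy q‖ ^ 2 = 0 := by
    have h1 : ∫ q, (inner ℝ (w q) (wyy q) + inner ℝ (wy q) (wy q)) = 0 :=
      int_dy (P := fun q => inner ℝ (w q) (wy q)) (cw.inner cwy) (cs_inner sw)
        ((cw.inner cwyy).add (cwy.inner cwy)) ((cs_inner sw).add (cs_inner swy))
        (fun t y => (dy t y).inner ℝ (dyy t y))
    simp only [real_inner_self_eq_norm_sq] at h1
    rw [integral_add j3 iy] at h1
    exact h1
  set D := δ⁻¹ with hD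
  have hDδ : δ * D = 1 := mul_inv_cancel₀ hδ.ne'
  have hD1 : 1 ≤ D := (one_le_inv₀ hδ).mpr hδ1.le
  have hD0 : 0 < D := by linarith
  set μ := δ * X + lam with hμ
  have hμ0 : 0 ≤ μ := by positivity
  have hZμ : X + lam ≤ D * μ := by
    have : D * μ = (δ * D) * X + D * lam := by rw [hμ]; ring
    rw [this, hDδ]; nlinarith
  -- pointwise bound
  have P : ∀ q, δ * ‖wt q‖ ^ 2 + δ * ‖wyy q‖ ^ 2 + 2 * inner ℝ (wt q) (wyy q) ≤
      3 * D * ‖f q‖ ^ 2 + 12 * D ^ 3 * X * ‖wy q‖ ^ 2 + 3 * D ^ 5 * μ ^ 2 * ‖w q‖ ^ 2 := by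
    intro q
    have p : 0 < a q := hδ.trans_le (ha q).1
    have hc1 : δ * X ≤ c q := by
      have := (sq_nonneg _).trans (hb q)
      have := nonneg_of_mul_nonneg_right this p
      linarith
    have hc0 : 0 ≤ c q + lam := by nlinarith
    have hcμ : c q + lam ≤ D ^ 2 * μ := by
      have h1 := hcX q
      have : D ^ 2 * μ = (δ * D) * D * X + D ^ 2 * lam := by rw [hμ]; ring
      rw [this, hDδ]
      have : 1 ≤ D ^ 2 := one_le_pow₀ hD1
      nlinarith
    have hb2 : b q ^ 2 ≤ D ^ 2 * X := by
      refine (hb q).trans ?_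
      have h1 : a q * (c q - δ * X) ≤ D * (c q - δ * X) :=
        mul_le_mul_of_nonneg_right (ha q).2 (by linarith)
      have h2 : D * (c q - δ * X) ≤ D * (D * X) :=
        mul_le_mul_of_nonneg_left (by have := hcX q; have := mul_nonneg hδ.le hX; linarith) hD0.le
      linarith
    have e : wt q + (a q : ℝ) • wyy q = f q - 2 * Complex.I * b q * wy q + (c q + lam) * w q := by
      rw [hf q, Complex.real_smul]; ring
    have n1 : ‖wt q + (a q : ℝ) • wyy q‖ ^ 2 = ‖wt q‖ ^ 2 + 2 * (a q * inner ℝ (wt q) (wyy q))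
        + a q ^ 2 * ‖wyy q‖ ^ 2 := by
      rw [norm_add_sq_real, inner_smul_right, norm_smul, mul_pow, Real.norm_eq_abs, sq_abs]
    have n2 : ‖wt q + (a q : ℝ) • wyy q‖ ≤ ‖f q‖ + 2 * |b q| * ‖wy q‖ + (c q + lam) * ‖w q‖ := by
      rw [e]
      refine (norm_add_le _ _).trans (add_le_add ((norm_sub_le _ _).trans (add_le_add le_rfl ?_)) ?_)
      · simp
      · rw [norm_mul, ← Complex.ofReal_add, Complex.norm_real, Real.norm_of_nonneg hc0]
    have n3 : ‖wt q + (a q : ℝ) • wyy q‖ ^ 2 ≤ 3 * ‖f q‖ ^ 2 + 12 * D ^ 2 * X * ‖wy q‖ ^ 2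
        + 3 * D ^ 4 * μ ^ 2 * ‖w q‖ ^ 2 := by
      have s1 := pow_le_pow_left₀ (norm_nonneg _) n2 2
      have s2 : (2 * |b q| * ‖wy q‖) ^ 2 ≤ 4 * D ^ 2 * X * ‖wy q‖ ^ 2 := by
        rw [mul_pow, mul_pow, sq_abs]
        apply mul_le_mul_of_nonneg_right _ (sq_nonneg _); linarith
      have s3 : ((c q + lam) * ‖w q‖) ^ 2 ≤ D ^ 4 * μ ^ 2 * ‖w q‖ ^ 2 := by
        rw [mul_pow]
        apply mul_le_mul_of_nonneg_right _ (sq_nonneg _)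
        have := pow_le_pow_left₀ hc0 hcμ 2
        linarith
      nlinarith [sq_nonneg (‖f q‖ - 2 * |b q| * ‖wy q‖), sq_nonneg (‖f q‖ - (c q + lam) * ‖w q‖),
        sq_nonneg (2 * |b q| * ‖wy q‖ - (c q + lam) * ‖w q‖)]
    have ai : (a q)⁻¹ ≤ D := by
      rw [hD]; exact inv_anti₀ hδ (ha q).1
    have ai2 : δ ≤ (a q)⁻¹ := by
      rw [le_inv_comm₀ hδ p]; exact (ha q).2
    have n4 : (a q)⁻¹ * ‖wt q + (a q : ℝ) • wyy q‖ ^ 2 ≤ D * (3 * ‖f q‖ ^ 2 + 12 * D ^ 2 * X * ‖wy q‖ ^ 2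
        + 3 * D ^ 4 * μ ^ 2 * ‖w q‖ ^ 2) :=
      mul_le_mul ai n3 (sq_nonneg _) hD0.le
    have n5 : (a q)⁻¹ * ‖wt q + (a q : ℝ) • wyy q‖ ^ 2 = (a q)⁻¹ * ‖wt q‖ ^ 2
      + 2 * inner ℝ (wt q) (wyy q) + a q * ‖wyy q‖ ^ 2 := by
      rw [n1]; field_simp
    have n6 := mul_le_mul_of_nonneg_right ai2 (sq_nonneg ‖wt q‖)
    have n7 := mul_le_mul_of_nonneg_right (ha q).1 (sq_nonneg ‖wyy q‖)
    rw [n5] at n4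
    linarith
  have P' : δ * (∫ q, ‖wt q‖ ^ 2) + δ * (∫ q, ‖wyy q‖ ^ 2) + 2 * (∫ q, inner ℝ (wt q) (wyy q)) ≤
      3 * D * (∫ q, ‖f q‖ ^ 2) + 12 * D ^ 3 * X * (∫ q, ‖wy q‖ ^ 2)
        + 3 * D ^ 5 * μ ^ 2 * ∫ q, ‖w q‖ ^ 2 := by
    simp only [← integral_const_mul]
    rw [← integral_add (it.const_mul _) (iyy.const_mul _),
      ← integral_add (f := fun q => δ * ‖wt q‖ ^ 2 + δ * ‖wyy q‖ ^ 2)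
        ((it.const_mul _).add (iyy.const_mul _)) (j1.const_mul _),
      ← integral_add (jf.const_mul _) (iy.const_mul _),
      ← integral_add (f := fun q => 3 * D * ‖f q‖ ^ 2 + 12 * D ^ 3 * X * ‖wy q‖ ^ 2)
        ((jf.const_mul _).add (iy.const_mul _)) (iw.const_mul _)]
    exact integral_mono (((it.const_mul _).add (iyy.const_mul _)).add (j1.const_mul _))
      (((jf.const_mul _).add (iy.const_mul _)).add (iw.const_mul _)) P
  have Q' : ∀ κ > 0, (X + lam) * (∫ q, ‖wy q‖ ^ 2) ≤
      κ * (∫ q, ‖wyy q‖ ^ 2) + (X + lam) ^ 2 / (4 * κ) * ∫ q, ‖w q‖ ^ 2 := by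
    intro κ hκ
    have e : (X + lam) * (∫ q, ‖wy q‖ ^ 2) = (-(X + lam)) * ∫ q, inner ℝ (w q) (wyy q) := by
      have : (∫ q, ‖wy q‖ ^ 2) = - ∫ q, inner ℝ (w q) (wyy q) := by linarith
      rw [this]; ring
    rw [e]
    simp only [← integral_const_mul]
    rw [← integral_add (iyy.const_mul _) (iw.const_mul _)]
    apply integral_mono (j3.const_mul _) ((iyy.const_mul _).add (iw.const_mul _))
    intro q
    simp only [Pi.add_apply]
    have h1 := neg_le_of_abs_le (abs_real_inner_le_norm (w q) (wyy q))
    have h2 : κ * ‖wyy q‖ ^ 2 + (X + lam) ^ 2 / (4 * κ) * ‖w q‖ ^ 2 - (X + lam) * (‖w q‖ * ‖wyy q‖)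
      = κ * (‖wyy q‖ - (X + lam) / (2 * κ) * ‖w q‖) ^ 2 := by field_simp; ring
    have h3 : 0 ≤ κ * (‖wyy q‖ - (X + lam) / (2 * κ) * ‖w q‖) ^ 2 := by positivity
    have h4 : (-(X + lam)) * inner ℝ (w q) (wyy q) ≤ (X + lam) * (‖w q‖ * ‖wyy q‖) := by nlinarith
    linarith
  have Q := Q' (δ ^ 4 / 24) (by positivity)
  have eq1 : (X + lam) ^ 2 / (4 * (δ ^ 4 / 24)) = 6 * D ^ 4 * (X + lam) ^ 2 := by
    rw [hD]; field_simp; ring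
  rw [eq1] at Q
  rw [Z1] at P'
  have St0 : 0 ≤ ∫ q, ‖wt q‖ ^ 2 := integral_nonneg fun q => sq_nonneg _
  have Syy0 : 0 ≤ ∫ q, ‖wyy q‖ ^ 2 := integral_nonneg fun q => sq_nonneg _
  have Sy0 : 0 ≤ ∫ q, ‖wy q‖ ^ 2 := integral_nonneg fun q => sq_nonneg _
  have Sw0 : 0 ≤ ∫ q, ‖w q‖ ^ 2 := integral_nonneg fun q => sq_nonneg _
  have Sf0 : 0 ≤ ∫ q, ‖f q‖ ^ 2 := integral_nonneg fun q => sq_nonneg _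
  generalize (∫ q, ‖wt q‖ ^ 2) = St at *
  generalize (∫ q, ‖wyy q‖ ^ 2) = Syy at *
  generalize (∫ q, ‖wy q‖ ^ 2) = Sy at *
  generalize (∫ q, ‖w q‖ ^ 2) = Sw at *
  generalize (∫ q, ‖f q‖ ^ 2) = Sf at *
  exact full_arith hδ hδ1 hX hlam hD1 hDδ hμ0 hZμ St0 Syy0 Sy0 Sw0 Sf0 (by linarith [L]) (by linarith [P']) Q


def Good {d : ℕ} (v : ℝ × (Fin d → ℝ) → ℝ) : Prop :=
  ContDiff ℝ (⊤ : ℕ∞) v ∧ HasCompactSupport v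

lemma Good.fderiv_apply {d : ℕ} {v : ℝ × (Fin d → ℝ) → ℝ} (h : Good v) (e : ℝ × (Fin d → ℝ)) :
    Good (fun p => fderiv ℝ v p e) := by
  refine ⟨?_, ?_⟩
  · exact (h.1.fderiv_right (m := (⊤ : ℕ∞)) (by simp)).clm_apply contDiff_const
  · exact h.2.fderiv_apply ℝ e

lemma Good.pdt {d : ℕ} {v : ℝ × (Fin d → ℝ) → ℝ} (h : Good v) : Good (pdt v) := h.fderiv_apply _

lemma Good.pdx {d : ℕ} {v : ℝ × (Fin d → ℝ) → ℝ} (h : Good v) (j : Fin d) : Good (pdx j v) :=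
  h.fderiv_apply _

lemma Good.mulLeft {d : ℕ} {v c : ℝ × (Fin d → ℝ) → ℝ} (h : Good v) (hc : ContDiff ℝ (⊤ : ℕ∞) c) :
    Good (fun p => c p * v p) :=
  ⟨hc.mul h.1, h.2.mul_left⟩

lemma Good.add {d : ℕ} {v w : ℝ × (Fin d → ℝ) → ℝ} (h : Good v) (h' : Good w) :
    Good (fun p => v p + w p) := ⟨h.1.add h'.1, h.2.add h'.2⟩

lemma Good.sub {d : ℕ} {v w : ℝ × (Fin d → ℝ) → ℝ} (h : Good v) (h' : Good w) :
    Good (fun p => v p - w p) := ⟨h.1.sub h'.1, h.2.sub h'.2⟩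

lemma Good.sum {d : ℕ} {ι : Type*} {v : ι → ℝ × (Fin d → ℝ) → ℝ} (s : Finset ι)
    (h : ∀ i, Good (v i)) :
    Good (fun p => ∑ i ∈ s, v i p) := by
  classical
  induction s using Finset.induction_on with
  | empty => exact ⟨by simpa using contDiff_const, by simp only [Finset.sum_empty]; exact HasCompactSupport.zero⟩
  | insert i s hi ih =>
    simp only [Finset.sum_insert hi]
    exact (h i).add ih

lemma pd_comm {d : ℕ} {v : ℝ × (Fin d → ℝ) → ℝ} (h : Good v) (e e' p : ℝ × (Fin d → ℝ)) :
    fderiv ℝ (fun p => fderiv ℝ v p e) p e' = fderiv ℝ (fun p => fderiv ℝ v p e') p e := by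
  have hd : DifferentiableAt ℝ (fderiv ℝ v) p :=
    (h.1.fderiv_right (m := (⊤ : ℕ∞)) (by simp)).differentiable (by simp) p
  have hs : IsSymmSndFDerivAt ℝ v p :=
    h.1.contDiffAt.isSymmSndFDerivAt (by simp; exact WithTop.coe_le_coe.mpr le_top)
  have k : ∀ e : ℝ × (Fin d → ℝ), HasFDerivAt (fun p => fderiv ℝ v p e)
      ((fderiv ℝ (fderiv ℝ v) p).flip e) p := fun e => by
    have := hd.hasFDerivAt.clm_apply (hasFDerivAt_const e p)
    simpa using this
  rw [(k e).fderiv, (k e').fderiv]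
  exact hs.eq _ _

noncomputable def ker {n : ℕ} (ξ x' : Fin n → ℝ) : ℂ :=
  Complex.exp (-Complex.I * ((∑ j, ξ j * x' j : ℝ) : ℂ))

lemma ker_cont {n : ℕ} (ξ : Fin n → ℝ) : Continuous (ker ξ) := by
  unfold ker; fun_prop

lemma cons_cont {n : ℕ} : Continuous fun r : ℝ × (Fin n → ℝ) => (Fin.cons r.1 r.2 : Fin (n + 1) → ℝ) := by
  refine continuous_pi fun i => ?_
  refine Fin.cases ?_ (fun i => ?_) i
  · simpa using continuous_fst
  · simp only [Fin.cons_succ]; fun_prop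

lemma cons_norm {n : ℕ} (t y : ℝ) (x : Fin n → ℝ) :
    ‖x‖ ≤ ‖(t, (Fin.cons y x : Fin (n + 1) → ℝ))‖ ∧ ‖(t, y)‖ ≤ ‖(t, (Fin.cons y x : Fin (n + 1) → ℝ))‖ := by
  have h2 := norm_snd_le (t, (Fin.cons y x : Fin (n + 1) → ℝ))
  have h1 := norm_fst_le (t, (Fin.cons y x : Fin (n + 1) → ℝ))
  have k : ∀ i, ‖(Fin.cons y x : Fin (n + 1) → ℝ) i‖ ≤ ‖(Fin.cons y x : Fin (n + 1) → ℝ)‖ :=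
    norm_le_pi_norm _
  refine ⟨?_, ?_⟩
  · refine le_trans ?_ h2
    rw [pi_norm_le_iff_of_nonneg (norm_nonneg _)]
    intro i
    simpa using k i.succ
  · rw [Prod.norm_def]
    refine max_le h1 (le_trans ?_ h2)
    simpa using k 0

lemma integrand_cont {n : ℕ} {v : ℝ × (Fin (n + 1) → ℝ) → ℝ} (h : Good v) (ξ : Fin n → ℝ) :
    Continuous fun r : (ℝ × ℝ) × (Fin n → ℝ) =>
      (v (r.1.1, Fin.cons r.1.2 r.2) : ℂ) * ker ξ r.2 := by
  refine Continuous.mul ?_ ((ker_cont ξ).comp continuous_snd)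
  refine Complex.continuous_ofReal.comp (h.1.continuous.comp ?_)
  refine Continuous.prodMk (by fun_prop) ?_
  exact cons_cont.comp (f := fun r : (ℝ × ℝ) × (Fin n → ℝ) => (r.1.2, r.2)) (by fun_prop)

lemma Good.rad {n : ℕ} {v : ℝ × (Fin (n + 1) → ℝ) → ℝ} (h : Good v) (ξ : Fin n → ℝ) :
    ∃ R > 0, (∀ t y x, x ∉ Metric.closedBall (0 : Fin n → ℝ) R →
      (v (t, Fin.cons y x) : ℂ) * ker ξ x = 0) ∧ ∀ q : ℝ × ℝ, R ≤ ‖q‖ → ∀ x : Fin n → ℝ,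
      v (q.1, Fin.cons q.2 x) = 0 := by
  obtain ⟨R, hR, hv⟩ := h.2.exists_pos_le_norm
  refine ⟨R, hR, ?_, ?_⟩
  · intro t y x hx
    have : R < ‖x‖ := by simpa using hx
    rw [hv _ (this.le.trans (cons_norm t y x).1)]; simp
  · intro q hq x
    exact hv _ (hq.trans (cons_norm q.1 q.2 x).2)

lemma pF_cont {n : ℕ} {v : ℝ × (Fin (n + 1) → ℝ) → ℝ} (h : Good v) (ξ : Fin n → ℝ) :
    Continuous fun q : ℝ × ℝ => pFourier v q.1 q.2 ξ := by
  obtain ⟨R, hR, h1, h2⟩ := h.rad ξ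
  have := continuous_parametric_integral_of_continuous (μ := (volume : Measure (Fin n → ℝ)))
    (f := fun (q : ℝ × ℝ) (x : Fin n → ℝ) => (v (q.1, Fin.cons q.2 x) : ℂ) * ker ξ x)
    (integrand_cont h ξ) (isCompact_closedBall (0 : Fin n → ℝ) R)
  convert this using 2 with q
  exact (setIntegral_eq_integral_of_forall_compl_eq_zero (fun x hx => h1 q.1 q.2 x hx)).symm

lemma pF_supp {n : ℕ} {v : ℝ × (Fin (n + 1) → ℝ) → ℝ} (h : Good v) (ξ : Fin n → ℝ) :
    HasCompactSupport fun q : ℝ × ℝ => pFourier v q.1 q.2 ξ := by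
  obtain ⟨R, hR, h1, h2⟩ := h.rad ξ
  apply HasCompactSupport.intro (isCompact_closedBall (0 : ℝ × ℝ) R)
  intro q hq
  have hq' : R < ‖q‖ := by simpa using hq
  simp [pFourier, h2 q hq'.le]

lemma pF_int {n : ℕ} {v : ℝ × (Fin (n + 1) → ℝ) → ℝ} (h : Good v) (ξ : Fin n → ℝ) (t y : ℝ) :
    Integrable fun x : Fin n → ℝ => (v (t, Fin.cons y x) : ℂ) * ker ξ x := by
  obtain ⟨R, hR, h1, h2⟩ := h.rad ξ
  have c : Continuous fun x : Fin n → ℝ => (v (t, Fin.cons y x) : ℂ) * ker ξ x :=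
    (integrand_cont h ξ).comp (f := fun x : Fin n → ℝ => ((t, y), x)) (by fun_prop)
  exact c.integrable_of_hasCompactSupport
    (HasCompactSupport.intro (isCompact_closedBall (0 : Fin n → ℝ) R) (h1 t y))

lemma deriv_int {n : ℕ} {F F' : ℝ → (Fin n → ℝ) → ℂ} (hF : ∀ s, Continuous (F s))
    (hF' : Continuous F'.uncurry) {R : ℝ}
    (h0 : ∀ s x, x ∉ Metric.closedBall (0 : Fin n → ℝ) R → F s x = 0)
    (h0' : ∀ s x, x ∉ Metric.closedBall (0 : Fin n → ℝ) R → F' s x = 0)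
    (hd : ∀ s x, HasDerivAt (fun s => F s x) (F' s x) s) (s : ℝ) :
    HasDerivAt (fun s => ∫ x, F s x) (∫ x, F' s x) s := by
  obtain ⟨M, hM⟩ := ((isCompact_closedBall s 1).prod
    (isCompact_closedBall (0 : Fin n → ℝ) R)).bddAbove_image hF'.norm.continuousOn
  have cF' : ∀ s, Continuous (F' s) := fun s => hF'.comp (f := fun x => (s, x)) (by fun_prop)
  refine (hasDerivAt_integral_of_dominated_loc_of_deriv_le (F := F) (F' := F')
    (bound := (Metric.closedBall (0 : Fin n → ℝ) R).indicator fun _ => M)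
    (Metric.closedBall_mem_nhds s one_pos)
    (Filter.Eventually.of_forall fun s => (hF s).aestronglyMeasurable)
    ((hF s).integrable_of_hasCompactSupport
      (HasCompactSupport.intro (isCompact_closedBall (0 : Fin n → ℝ) R) (h0 s)))
    (cF' s).aestronglyMeasurable ?_ ?_ (Filter.Eventually.of_forall fun x s _ => hd s x)).2
  · refine Filter.Eventually.of_forall fun x s' hs' => ?_
    by_cases hx : x ∈ Metric.closedBall (0 : Fin n → ℝ) R
    · rw [Set.indicator_of_mem hx]
      exact hM ⟨(s', x), ⟨hs', hx⟩, rfl⟩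
    · rw [Set.indicator_of_notMem hx, h0' s' x hx, norm_zero]
  · rw [integrable_indicator_iff measurableSet_closedBall]
    exact integrableOn_const (isCompact_closedBall (0 : Fin n → ℝ) R).measure_lt_top.ne

lemma pF_dt {n : ℕ} {v : ℝ × (Fin (n + 1) → ℝ) → ℝ} (h : Good v) (ξ : Fin n → ℝ) (t y : ℝ) :
    HasDerivAt (fun s => pFourier v s y ξ) (pFourier (pdt v) t y ξ) t := by
  obtain ⟨R, hR, h1, h2⟩ := h.rad ξ
  obtain ⟨R', hR', h1', h2'⟩ := h.pdt.rad ξ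
  refine deriv_int (R := max R R') (F := fun s x => (v (s, Fin.cons y x) : ℂ) * ker ξ x)
    (F' := fun s x => (pdt v (s, Fin.cons y x) : ℂ) * ker ξ x) ?_ ?_ ?_ ?_ ?_ t
  · intro s
    exact (integrand_cont h ξ).comp (f := fun x : Fin n → ℝ => ((s, y), x)) (by fun_prop)
  · exact (integrand_cont h.pdt ξ).comp
      (f := fun x : ℝ × (Fin n → ℝ) => ((x.1, y), x.2)) (by fun_prop)
  · exact fun s x hx => h1 s y x fun hx' => hx (Metric.closedBall_subset_closedBall (le_max_left _ _) hx')
  · exact fun s x hx => h1' s y x fun hx' => hx (Metric.closedBall_subset_closedBall (le_max_right _ _) hx')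
  · intro s x
    refine HasDerivAt.mul_const ?_ _
    refine HasDerivAt.ofReal_comp ?_
    have hv : HasFDerivAt v _ (s, (Fin.cons y x : Fin (n + 1) → ℝ)) :=
      (h.1.differentiable (by simp) _).hasFDerivAt
    exact hv.comp_hasDerivAt s ((hasDerivAt_id s).prodMk (hasDerivAt_const s _))

lemma pF_dy {n : ℕ} {v : ℝ × (Fin (n + 1) → ℝ) → ℝ} (h : Good v) (ξ : Fin n → ℝ) (t y : ℝ) :
    HasDerivAt (fun z => pFourier v t z ξ) (pFourier (pdx 0 v) t y ξ) y := by
  obtain ⟨R, hR, h1, h2⟩ := h.rad ξ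
  obtain ⟨R', hR', h1', h2'⟩ := (h.pdx 0).rad ξ
  refine deriv_int (R := max R R') (F := fun s x => (v (t, Fin.cons s x) : ℂ) * ker ξ x)
    (F' := fun s x => (pdx 0 v (t, Fin.cons s x) : ℂ) * ker ξ x) ?_ ?_ ?_ ?_ ?_ y
  · intro s
    exact (integrand_cont h ξ).comp (f := fun x : Fin n → ℝ => ((t, s), x)) (by fun_prop)
  · exact (integrand_cont (h.pdx 0) ξ).comp
      (f := fun x : ℝ × (Fin n → ℝ) => ((t, x.1), x.2)) (by fun_prop)
  · exact fun s x hx => h1 t s x fun hx' => hx (Metric.closedBall_subset_closedBall (le_max_left _ _) hx')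
  · exact fun s x hx => h1' t s x fun hx' => hx (Metric.closedBall_subset_closedBall (le_max_right _ _) hx')
  · intro s x
    refine HasDerivAt.mul_const ?_ _
    refine HasDerivAt.ofReal_comp ?_
    have hv : HasFDerivAt v _ (t, (Fin.cons s x : Fin (n + 1) → ℝ)) :=
      (h.1.differentiable (by simp) _).hasFDerivAt
    refine hv.comp_hasDerivAt s ((hasDerivAt_const s t).prodMk ?_)
    rw [hasDerivAt_pi]
    intro i
    refine Fin.cases ?_ (fun i => ?_) i
    · simpa using hasDerivAt_id' s
    · simpa using hasDerivAt_const s (x i)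

lemma pF_dx {n : ℕ} {v : ℝ × (Fin (n + 1) → ℝ) → ℝ} (h : Good v) (ξ : Fin n → ℝ) (t y : ℝ)
    (i : Fin n) :
    pFourier (pdx i.succ v) t y ξ = Complex.I * ξ i * pFourier v t y ξ := by
  have e : ∀ x, (ker ξ x) * (pdx i.succ v (t, Fin.cons y x) : ℂ)
    = (pdx i.succ v (t, Fin.cons y x) : ℂ) * ker ξ x := fun x => mul_comm _ _
  have e2 : ∀ x, (-Complex.I * ξ i * ker ξ x) * (v (t, Fin.cons y x) : ℂ)
    = (-Complex.I * ξ i) * ((v (t, Fin.cons y x) : ℂ) * ker ξ x) := fun x => by ring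
  have e3 : ∀ x, ker ξ x * (v (t, Fin.cons y x) : ℂ)
    = (v (t, Fin.cons y x) : ℂ) * ker ξ x := fun x => by ring
  have := integral_bilinear_hasLineDerivAt_right_eq_neg_left_of_integrable
    (μ := (volume : Measure (Fin n → ℝ))) (B := ContinuousLinearMap.mul ℝ ℂ)
    (f := ker ξ) (f' := fun x => -Complex.I * ξ i * ker ξ x)
    (g := fun x => (v (t, Fin.cons y x) : ℂ)) (g' := fun x => (pdx i.succ v (t, Fin.cons y x) : ℂ))
    (v := Pi.single i 1)
    (by simp only [ContinuousLinearMap.mul_apply', e2]; exact (pF_int h ξ t y).const_mul _)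
    (by simp only [ContinuousLinearMap.mul_apply', e]; exact (pF_int (h.pdx _) ξ t y))
    (by simp only [ContinuousLinearMap.mul_apply', e3]; exact pF_int h ξ t y)
    ?_ ?_
  · simp only [ContinuousLinearMap.mul_apply', e, e2] at this
    rw [integral_const_mul] at this
    unfold pFourier
    unfold ker at this
    rw [this]; ring
  · intro x _
    unfold HasLineDerivAt ker
    have h1 : HasDerivAt (fun s : ℝ => ∑ j, ξ j * (x + s • (Pi.single i (1 : ℝ) : Fin n → ℝ)) j) (ξ i) 0 := by
      have : HasDerivAt (fun s : ℝ => (∑ j, ξ j * x j) + ξ i * s) (ξ i) 0 := by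
        simpa using ((hasDerivAt_id (0 : ℝ)).const_mul (ξ i)).const_add (∑ j, ξ j * x j)
      convert this using 2 with s
      simp [mul_add, Finset.sum_add_distrib, Pi.single_apply]
    have h2 := (h1.ofReal_comp.const_mul (-Complex.I)).cexp
    have h3 : Complex.exp (-Complex.I * ((∑ j, ξ j * (x + (0 : ℝ) • (Pi.single i (1 : ℝ) : Fin n → ℝ)) j : ℝ) : ℂ))
        * (-Complex.I * (ξ i : ℂ)) = -Complex.I * ξ i * Complex.exp (-Complex.I * ((∑ j, ξ j * x j : ℝ) : ℂ)) := by
      rw [zero_smul, add_zero]; ring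
    rw [h3] at h2
    exact h2
  · intro x _
    unfold HasLineDerivAt
    refine HasDerivAt.ofReal_comp ?_
    have hv : HasFDerivAt v _ (t, (Fin.cons y x : Fin (n + 1) → ℝ)) :=
      (h.1.differentiable (by simp) _).hasFDerivAt
    have := hv.hasLineDerivAt (0, Pi.single i.succ 1)
    unfold HasLineDerivAt at this
    have k : ∀ s : ℝ, (t, (Fin.cons y (x + s • (Pi.single i (1 : ℝ) : Fin n → ℝ)) : Fin (n + 1) → ℝ))
        = (t, (Fin.cons y x : Fin (n + 1) → ℝ)) + s • ((0 : ℝ), (Pi.single i.succ 1 : Fin (n + 1) → ℝ)) := by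
      intro s
      refine Prod.ext (by simp) ?_
      funext j
      refine Fin.cases ?_ (fun j => ?_) j
      · simp
      · simp [Pi.single_apply]
    simp only [k]
    exact this


lemma pF_add {n : ℕ} {v w : ℝ × (Fin (n + 1) → ℝ) → ℝ} (h : Good v) (h' : Good w) (ξ : Fin n → ℝ)
    (t y : ℝ) : pFourier (fun p => v p + w p) t y ξ = pFourier v t y ξ + pFourier w t y ξ := by
  have i1 := pF_int h ξ t y
  have i2 := pF_int h' ξ t y
  unfold ker at i1 i2
  unfold pFourier
  rw [← integral_add i1 i2]
  congr 1; funext x; push_cast; ring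

lemma pF_sub {n : ℕ} {v w : ℝ × (Fin (n + 1) → ℝ) → ℝ} (h : Good v) (h' : Good w) (ξ : Fin n → ℝ)
    (t y : ℝ) : pFourier (fun p => v p - w p) t y ξ = pFourier v t y ξ - pFourier w t y ξ := by
  have i1 := pF_int h ξ t y
  have i2 := pF_int h' ξ t y
  unfold ker at i1 i2
  unfold pFourier
  rw [← integral_sub i1 i2]
  congr 1; funext x; push_cast; ring

lemma pF_coef {n : ℕ} (v : ℝ × (Fin (n + 1) → ℝ) → ℝ) (c : ℝ × ℝ → ℝ) (ξ : Fin n → ℝ)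
    (t y : ℝ) : pFourier (fun p => c (p.1, p.2 0) * v p) t y ξ = c (t, y) * pFourier v t y ξ := by
  unfold pFourier
  rw [← integral_const_mul]
  congr 1; funext x; simp only [Fin.cons_zero]; push_cast; ring

lemma pF_sum {n : ℕ} {ι : Type*} (s : Finset ι) {v : ι → ℝ × (Fin (n + 1) → ℝ) → ℝ}
    (h : ∀ i, Good (v i)) (ξ : Fin n → ℝ) (t y : ℝ) :
    pFourier (fun p => ∑ i ∈ s, v i p) t y ξ = ∑ i ∈ s, pFourier (v i) t y ξ := by
  classical
  induction s using Finset.induction_on with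
  | empty => simp [pFourier]
  | insert i s hi ih =>
    simp only [Finset.sum_insert hi]
    rw [pF_add (h i) (Good.sum s h), ih]

lemma form_ineq {n : ℕ} {δ : ℝ} (hδ : 0 < δ) {a : Fin (n + 1) → Fin (n + 1) → ℝ}
    (hs : ∀ j k, a j k = a k j)
    (h : ∀ θ : Fin (n + 1) → ℝ, δ * ∑ j, (θ j) ^ 2 ≤ ∑ j, ∑ k, a j k * θ j * θ k ∧
          ∑ j, ∑ k, a j k * θ j * θ k ≤ δ⁻¹ * ∑ j, (θ j) ^ 2) (ξ : Fin n → ℝ) :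
    (δ ≤ a 0 0 ∧ a 0 0 ≤ δ⁻¹) ∧
    (∑ i : Fin n, a 0 i.succ * ξ i) ^ 2 ≤
      a 0 0 * ((∑ i : Fin n, ∑ j : Fin n, a i.succ j.succ * ξ i * ξ j) - δ * ∑ j, ξ j ^ 2) ∧
    (∑ i : Fin n, ∑ j : Fin n, a i.succ j.succ * ξ i * ξ j) ≤ δ⁻¹ * ∑ j, ξ j ^ 2 := by
  set b := ∑ i : Fin n, a 0 i.succ * ξ i with hb
  set c := ∑ i : Fin n, ∑ j : Fin n, a i.succ j.succ * ξ i * ξ j with hc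
  set X := ∑ j, ξ j ^ 2 with hX
  have key : ∀ p q : ℝ, δ * (p ^ 2 + q ^ 2 * X) ≤ a 0 0 * p ^ 2 + 2 * b * p * q + c * q ^ 2 ∧
      a 0 0 * p ^ 2 + 2 * b * p * q + c * q ^ 2 ≤ δ⁻¹ * (p ^ 2 + q ^ 2 * X) := by
    intro p q
    have := h (Fin.cons p fun i => q * ξ i)
    have e1 : ∑ j, ((Fin.cons p fun i => q * ξ i : Fin (n + 1) → ℝ) j) ^ 2 = p ^ 2 + q ^ 2 * X := by
      rw [Fin.sum_univ_succ]
      simp [mul_pow, hX, Finset.mul_sum]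
    have e2 : ∑ j, ∑ k, a j k * (Fin.cons p fun i => q * ξ i : Fin (n + 1) → ℝ) j
        * (Fin.cons p fun i => q * ξ i : Fin (n + 1) → ℝ) k
        = a 0 0 * p ^ 2 + 2 * b * p * q + c * q ^ 2 := by
      have k1 : ∑ i : Fin n, a 0 i.succ * p * (q * ξ i) = b * p * q := by
        rw [hb, Finset.sum_mul, Finset.sum_mul]; exact Finset.sum_congr rfl fun i _ => by ring
      have k2 : ∑ i : Fin n, a i.succ 0 * (q * ξ i) * p = b * p * q := by
        rw [hb, Finset.sum_mul, Finset.sum_mul]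
        exact Finset.sum_congr rfl fun i _ => by rw [hs]; ring
      have k3 : ∑ i : Fin n, ∑ j : Fin n, a i.succ j.succ * (q * ξ i) * (q * ξ j) = c * q ^ 2 := by
        rw [hc, Finset.sum_mul]
        refine Finset.sum_congr rfl fun i _ => ?_
        rw [Finset.sum_mul]
        exact Finset.sum_congr rfl fun j _ => by ring
      simp only [Fin.sum_univ_succ, Fin.cons_zero, Fin.cons_succ, Finset.sum_add_distrib, k1, k2, k3]
      ring
    rw [e1, e2] at this
    exact this
  have h10 := key 1 0
  have h01 := key 0 1
  refine ⟨⟨by linarith [h10.1], by linarith [h10.2]⟩, ?_, by linarith [h01.2]⟩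
  have hA : δ ≤ a 0 0 := by linarith [h10.1]
  have hC : 0 ≤ c - δ * X := by linarith [h01.1]
  have hA0 : 0 < a 0 0 := by linarith
  have := (key b (-(a 0 0))).1
  have k : 0 ≤ a 0 0 * (a 0 0 * (c - δ * X) - b ^ 2) := by nlinarith [sq_nonneg b]
  have := nonneg_of_mul_nonneg_right k hA0
  linarith

theorem final {n : ℕ} {δ : ℝ} (hδ : 0 < δ) (hδ1 : δ < 1)
    (a : ℝ × ℝ → Fin (n + 1) → Fin (n + 1) → ℝ)
    (ha : ∀ j k, ContDiff ℝ (⊤ : ℕ∞) fun q => a q j k)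
    (hs : ∀ q j k, a q j k = a q k j)
    (h : ∀ (q : ℝ × ℝ) (θ : Fin (n + 1) → ℝ),
          δ * ∑ j, (θ j) ^ 2 ≤ ∑ j, ∑ k, a q j k * θ j * θ k ∧
          ∑ j, ∑ k, a q j k * θ j * θ k ≤ δ⁻¹ * ∑ j, (θ j) ^ 2)
    (u : ℝ × (Fin (n + 1) → ℝ) → ℝ) (hu : Good u) (lam : ℝ) (hlam : 0 ≤ lam) (ξ : Fin n → ℝ) :
    (∫ q : ℝ × ℝ, ‖pFourierT u q.1 q.2 ξ‖ ^ 2)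
                  + (∫ q : ℝ × ℝ, ‖pFourierXX u q.1 q.2 ξ‖ ^ 2)
                  + ((∑ j, (ξ j) ^ 2) ^ 2 + lam ^ 2) *
                      (∫ q : ℝ × ℝ, ‖pFourier u q.1 q.2 ξ‖ ^ 2)
                  + ((∑ j, (ξ j) ^ 2) + lam) *
                      (∫ q : ℝ × ℝ, ‖pFourierX u q.1 q.2 ξ‖ ^ 2)
                ≤ 25000 * δ⁻¹ ^ 14 * ∫ q : ℝ × ℝ,
                    ‖pFourier (fun p =>
                        pdt u p + (∑ j, ∑ k, a (p.1, p.2 0) j k * pdxx j k u p)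
                          - lam * u p) q.1 q.2 ξ‖ ^ 2 := by
  have eT : ∀ t y, pFourierT u t y ξ = pFourier (pdt u) t y ξ := fun t y => (pF_dt hu ξ t y).deriv
  have eX : ∀ t y, pFourierX u t y ξ = pFourier (pdx 0 u) t y ξ := fun t y => (pF_dy hu ξ t y).deriv
  have eXX : ∀ t y, pFourierXX u t y ξ = pFourier (pdx 0 (pdx 0 u)) t y ξ := fun t y => by
    unfold pFourierXX
    simp only [eX]
    exact (pF_dy (hu.pdx 0) ξ t y).deriv
  simp only [eT, eX, eXX]
  have comm0 : pdt (pdx 0 u) = pdx 0 (pdt u) := funext fun p => pd_comm hu _ _ p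
  have commk : ∀ k, pdx 0 (pdx k u) = pdx k (pdx 0 u) := fun k => funext fun p => pd_comm hu _ _ p
  have coefs : ∀ j k, ContDiff ℝ (⊤ : ℕ∞) fun p : ℝ × (Fin (n + 1) → ℝ) => a (p.1, p.2 0) j k := by
    intro j k
    refine (ha j k).comp (f := fun p : ℝ × (Fin (n + 1) → ℝ) => (p.1, p.2 0)) ?_
    fun_prop
  have g1 : ∀ j k, Good fun p => a (p.1, p.2 0) j k * pdxx j k u p := fun j k =>
    ((hu.pdx k).pdx j).mulLeft (coefs j k)
  have g2 : ∀ j, Good fun p => ∑ k, a (p.1, p.2 0) j k * pdxx j k u p := fun j => Good.sum _ (g1 j)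
  have g3 : Good fun p => ∑ j, ∑ k, a (p.1, p.2 0) j k * pdxx j k u p := Good.sum _ g2
  have g4 : Good fun p => lam * u p := hu.mulLeft contDiff_const
  have g5 := hu.pdt.add g3
  have g6 := g5.sub g4
  refine full (a := fun q => a q 0 0) (b := fun q => ∑ i : Fin n, a q 0 i.succ * ξ i)
    (c := fun q => ∑ i : Fin n, ∑ j : Fin n, a q i.succ j.succ * ξ i * ξ j)
    (w := fun q => pFourier u q.1 q.2 ξ) (wt := fun q => pFourier (pdt u) q.1 q.2 ξ)
    (wy := fun q => pFourier (pdx 0 u) q.1 q.2 ξ) (wyy := fun q => pFourier (pdx 0 (pdx 0 u)) q.1 q.2 ξ)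
    (wty := fun q => pFourier (pdx 0 (pdt u)) q.1 q.2 ξ)
    hδ hδ1 (Finset.sum_nonneg fun j _ => sq_nonneg _) hlam (ha 0 0).continuous
    (fun q => (form_ineq hδ (hs q) (h q) ξ).1) (fun q => (form_ineq hδ (hs q) (h q) ξ).2.1)
    (fun q => (form_ineq hδ (hs q) (h q) ξ).2.2)
    (pF_cont hu ξ) (pF_supp hu ξ) (pF_cont hu.pdt ξ) (pF_supp hu.pdt ξ)
    (pF_cont (hu.pdx 0) ξ) (pF_supp (hu.pdx 0) ξ)
    (pF_cont ((hu.pdx 0).pdx 0) ξ) (pF_supp ((hu.pdx 0).pdx 0) ξ)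
    (pF_cont (hu.pdt.pdx 0) ξ) (pF_supp (hu.pdt.pdx 0) ξ)
    (pF_cont g6 ξ) (pF_supp g6 ξ)
    (pF_dt hu ξ) (pF_dy hu ξ) (pF_dy (hu.pdx 0) ξ) (fun t y => ?_) (pF_dy hu.pdt ξ) ?_
  · rw [← comm0]; exact pF_dt (hu.pdx 0) ξ t y
  · rintro ⟨t, y⟩
    simp only
    rw [pF_sub g5 g4, pF_add hu.pdt g3, pF_sum _ g2]
    simp only [pF_sum _ (g1 _)]
    have ec : ∀ j k, pFourier (fun p => a (p.1, p.2 0) j k * pdxx j k u p) t y ξ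
        = a (t, y) j k * pFourier (pdx j (pdx k u)) t y ξ := fun j k =>
      pF_coef (pdxx j k u) (fun q => a q j k) ξ t y
    have el : pFourier (fun p => lam * u p) t y ξ = lam * pFourier u t y ξ :=
      pF_coef u (fun _ => lam) ξ t y
    simp only [ec, el, Fin.sum_univ_succ, commk, pF_dx (hu.pdx 0), pF_dx (hu.pdx _), pF_dx hu,
      Finset.sum_add_distrib]
    have s1 : ∑ i : Fin n, (a (t, y) 0 i.succ : ℂ) * (Complex.I * ξ i * pFourier (pdx 0 u) t y ξ)
        = Complex.I * ((∑ i : Fin n, a (t, y) 0 i.succ * ξ i : ℝ) : ℂ) * pFourier (pdx 0 u) t y ξ := by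
      push_cast
      rw [Finset.mul_sum, Finset.sum_mul]
      exact Finset.sum_congr rfl fun i _ => by ring
    have s2 : ∑ i : Fin n, (a (t, y) i.succ 0 : ℂ) * (Complex.I * ξ i * pFourier (pdx 0 u) t y ξ)
        = Complex.I * ((∑ i : Fin n, a (t, y) 0 i.succ * ξ i : ℝ) : ℂ) * pFourier (pdx 0 u) t y ξ := by
      rw [← s1]
      exact Finset.sum_congr rfl fun i _ => by rw [hs]
    have s3 : ∑ i : Fin n, ∑ j : Fin n, (a (t, y) i.succ j.succ : ℂ) *
          (Complex.I * ξ i * (Complex.I * ξ j * pFourier u t y ξ))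
        = - ((∑ i : Fin n, ∑ j : Fin n, a (t, y) i.succ j.succ * ξ i * ξ j : ℝ) : ℂ)
          * pFourier u t y ξ := by
      push_cast
      rw [neg_mul, Finset.sum_mul, ← Finset.sum_neg_distrib]
      refine Finset.sum_congr rfl fun i _ => ?_
      rw [Finset.sum_mul, ← Finset.sum_neg_distrib]
      refine Finset.sum_congr rfl fun j _ => ?_
      linear_combination (a (t, y) i.succ j.succ : ℂ) * ξ i * ξ j * pFourier u t y ξ * Complex.I_mul_I
    rw [s1, s2, s3]
    ring

theorem stmt5 (n : ℕ) (hn : 1 ≤ n) (δ : ℝ) (hδ : δ ∈ Set.Ioo (0 : ℝ) 1) :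
    ∃ N : ℝ, 0 < N ∧
      ∀ a : ℝ × ℝ → Fin (n + 1) → Fin (n + 1) → ℝ,
        (∀ j k, ContDiff ℝ (⊤ : ℕ∞) fun q => a q j k) →
        (∀ q j k, a q j k = a q k j) →
        (∀ (q : ℝ × ℝ) (θ : Fin (n + 1) → ℝ),
          δ * ∑ j, (θ j) ^ 2 ≤ ∑ j, ∑ k, a q j k * θ j * θ k ∧
          ∑ j, ∑ k, a q j k * θ j * θ k ≤ δ⁻¹ * ∑ j, (θ j) ^ 2) →
        ∀ u : ℝ × (Fin (n + 1) → ℝ) → ℝ, ContDiff ℝ (⊤ : ℕ∞) u → HasCompactSupport u →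
          ∀ lam : ℝ, 0 ≤ lam →
            ∀ ξ : Fin n → ℝ,
              (∫ q : ℝ × ℝ, ‖pFourierT u q.1 q.2 ξ‖ ^ 2)
                  + (∫ q : ℝ × ℝ, ‖pFourierXX u q.1 q.2 ξ‖ ^ 2)
                  + ((∑ j, (ξ j) ^ 2) ^ 2 + lam ^ 2) *
                      (∫ q : ℝ × ℝ, ‖pFourier u q.1 q.2 ξ‖ ^ 2)
                  + ((∑ j, (ξ j) ^ 2) + lam) *
                      (∫ q : ℝ × ℝ, ‖pFourierX u q.1 q.2 ξ‖ ^ 2)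
                ≤ N * ∫ q : ℝ × ℝ,
                    ‖pFourier (fun p =>
                        pdt u p + (∑ j, ∑ k, a (p.1, p.2 0) j k * pdxx j k u p)
                          - lam * u p) q.1 q.2 ξ‖ ^ 2 := by
  refine ⟨25000 * δ⁻¹ ^ 14, ?_, ?_⟩
  · have := hδ.1
    positivity
  · intro a ha hs h u hu hc lam hlam ξ
    exact final hδ.1 hδ.2 a ha hs h u ⟨hu, hc⟩ lam hlam ξ
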